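/- arXiv:2105.02053 — 4 statements merged into one kernel-verified Lean document; each statement's English description precedes it below -/
import Mathlib

section
/- As μ → 0 with μ ranging over ℂ ∖ [0,∞), the real part of Φ_∞(μ) converges to −1/V_s'(0) < 0. -/
open MeasureTheory Filter

/-- The function `Φ_∞(μ) = μ ∫₀^∞ (μ - V_s(y))⁻² dy`. -/
noncomputable def PhiInf (Vs : ℝ → ℝ) (μ : ℂ) : ℂ :=
  μ * ∫ y in Set.Ioi (0 : ℝ), ((μ - (Vs y : ℂ)) ^ 2)⁻¹

/-! Near `0`, since `(-1 / (V' (V - μ)))' = (V - μ)⁻² - (1 / V')' / (V - μ)`, the boundary term at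
`0` contributes `μ · (1 / V' 0) / (0 - μ) = -1 / V' 0`. What remains is a Cauchy integral, whose
density is `(1 / V')' = g V'` with `g` Lipschitz with respect to `V`; subtracting from `g` its value
at the point where `V` is closest to `μ` leaves a bounded integrand and a difference of logarithms,
so the remaining integral is `O(log (1 / ‖μ‖))`, even when `μ` approaches `0` tangentially to the
cut, and the prefactor `μ` kills it. Away from `0` the integral is bounded. -/

open Set Topology Asymptotics

/-- The cut plane `ℂ ∖ [0, ∞)` in which `μ` ranges, described by coordinates. -/
def cutPlane : Set ℂ := {μ | μ.im ≠ 0 ∨ μ.re < 0}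

lemma ofReal_sub_mem_slitPlane {μ : ℂ} (hμ : μ ∈ cutPlane) {x : ℝ} (hx : 0 ≤ x) :
    (x : ℂ) - μ ∈ Complex.slitPlane := by
  rw [Complex.mem_slitPlane_iff, Complex.sub_re, Complex.sub_im, Complex.ofReal_re,
    Complex.ofReal_im, zero_sub, neg_ne_zero]
  exact hμ.symm.imp_left fun h => by linarith

section Logarithm

lemma norm_mul_log_le (z : ℂ) :
    ‖z * Complex.log z‖ ≤ |‖z‖ * Real.log ‖z‖| + Real.pi * ‖z‖ := by
  have hlog : ‖Complex.log z‖ ≤ |Real.log ‖z‖| + Real.pi := by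
    refine (Complex.norm_le_abs_re_add_abs_im _).trans ?_
    rw [Complex.log_re, Complex.log_im]
    gcongr
    exact Complex.abs_arg_le_pi z
  calc ‖z * Complex.log z‖ = ‖z‖ * ‖Complex.log z‖ := norm_mul _ _
    _ ≤ ‖z‖ * (|Real.log ‖z‖| + Real.pi) := by gcongr
    _ = |‖z‖ * Real.log ‖z‖| + Real.pi * ‖z‖ := by rw [abs_mul, abs_norm]; ring

lemma tendsto_mul_log_nhds_zero : Tendsto (fun z : ℂ => z * Complex.log z) (𝓝 0) (𝓝 0) := by
  have hcont : Continuous fun z : ℂ => |‖z‖ * Real.log ‖z‖| + Real.pi * ‖z‖ :=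
    (Real.continuous_mul_log.comp continuous_norm).abs.add (continuous_const.mul continuous_norm)
  exact squeeze_zero_norm norm_mul_log_le (by simpa using hcont.tendsto 0)

lemma tendsto_mul_log_sub_log_nhds_zero {c : ℂ} (hc : c ∈ Complex.slitPlane) :
    Tendsto (fun μ : ℂ => μ * (Complex.log (c - μ) - Complex.log (-μ))) (𝓝 0) (𝓝 0) := by
  have hregular : ContinuousAt (fun μ : ℂ => μ * Complex.log (c - μ)) 0 :=
    continuousAt_id.mul (ContinuousAt.clog (by fun_prop) (by simpa using hc))
  have hsingular : Tendsto (fun μ : ℂ => -μ * Complex.log (-μ)) (𝓝 0) (𝓝 0) :=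
    tendsto_mul_log_nhds_zero.comp (by simpa using continuous_neg.tendsto (0 : ℂ))
  simpa [mul_sub, ← sub_eq_add_neg] using hregular.tendsto.add hsingular

end Logarithm

section CauchyIntegral

variable {V g : ℝ → ℝ} {a b : ℝ} {μ : ℂ}

lemma norm_integral_div_le_of_norm_le_mul_norm {f w : ℝ → ℂ} {C : ℝ} (hab : a ≤ b) (hC : 0 ≤ C)
    (hf : ∀ y ∈ Icc a b, ‖f y‖ ≤ C * ‖w y‖) : ‖∫ y in a..b, f y / w y‖ ≤ C * |b - a| := by
  refine intervalIntegral.norm_integral_le_of_norm_le_const fun y hy => ?_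
  rw [norm_div]
  exact div_le_of_le_mul₀ (norm_nonneg _) hC (hf y (Ioc_subset_Icc_self (uIoc_of_le hab ▸ hy)))

lemma exists_forall_abs_sub_le_two_mul_norm_sub (hab : a ≤ b) (hV : ContinuousOn V (Icc a b))
    (μ : ℂ) : ∃ c ∈ Icc a b, ∀ y ∈ Icc a b, |V y - V c| ≤ 2 * ‖(V y : ℂ) - μ‖ := by
  obtain ⟨c, hc, hmin⟩ := isCompact_Icc.exists_isMinOn (nonempty_Icc.2 hab)
    (((Complex.continuous_ofReal.comp_continuousOn hV).sub continuousOn_const).norm :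
      ContinuousOn (fun y => ‖(V y : ℂ) - μ‖) (Icc a b))
  refine ⟨c, hc, fun y hy => ?_⟩
  calc |V y - V c| = ‖((V y : ℂ) - μ) - ((V c : ℂ) - μ)‖ := by
        rw [sub_sub_sub_cancel_right, ← Complex.ofReal_sub, Complex.norm_real, Real.norm_eq_abs]
    _ ≤ ‖(V y : ℂ) - μ‖ + ‖(V c : ℂ) - μ‖ := norm_sub_le _ _
    _ ≤ 2 * ‖(V y : ℂ) - μ‖ := by
        have hcy : ‖(V c : ℂ) - μ‖ ≤ ‖(V y : ℂ) - μ‖ := hmin hy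
        linarith

lemma continuousOn_deriv_of_contDiffAt (hV : ∀ y ∈ Icc a b, ContDiffAt ℝ 1 V y) :
    ContinuousOn (deriv V) (Icc a b) := fun y hy =>
  ((hV y hy).derivWithin (m := 0) le_rfl).continuousAt.continuousWithinAt

lemma exists_forall_abs_sub_le_mul_abs_sub (hg : ∀ y ∈ Icc a b, ContDiffAt ℝ 1 g y)
    (hV : ∀ y ∈ Icc a b, ContDiffAt ℝ 1 V y) (hV' : ∀ y ∈ Icc a b, deriv V y ≠ 0) :
    ∃ K, 0 ≤ K ∧ ∀ x ∈ Icc a b, ∀ y ∈ Icc a b, |g x - g y| ≤ K * |V x - V y| := by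
  have hratio : ContinuousOn (fun y => deriv g y / deriv V y) (Icc a b) :=
    (continuousOn_deriv_of_contDiffAt hg).div (continuousOn_deriv_of_contDiffAt hV) hV'
  obtain ⟨K, hK⟩ := isCompact_Icc.exists_bound_of_continuousOn hratio
  refine ⟨|K|, abs_nonneg K, fun x hx y hy => ?_⟩
  wlog hxy : x < y generalizing x y
  · obtain rfl | hyx := (not_lt.1 hxy).eq_or_lt
    · simp
    · rw [abs_sub_comm (g x), abs_sub_comm (V x)]
      exact this y hy x hx hyx
  have hsub : Icc x y ⊆ Icc a b := Icc_subset_Icc hx.1 hy.2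
  obtain ⟨c, hc, hslope⟩ := exists_ratio_deriv_eq_ratio_slope V hxy
    (fun z hz => (hV z (hsub hz)).continuousAt.continuousWithinAt)
    (fun z hz => ((hV z (hsub (Ioo_subset_Icc_self hz))).differentiableAt
      one_ne_zero).differentiableWithinAt) g
    (fun z hz => (hg z (hsub hz)).continuousAt.continuousWithinAt)
    (fun z hz => ((hg z (hsub (Ioo_subset_Icc_self hz))).differentiableAt
      one_ne_zero).differentiableWithinAt)
  have hcab := hsub (Ioo_subset_Icc_self hc)
  have hsub_eq : g y - g x = deriv g c / deriv V c * (V y - V x) := by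
    field_simp [hV' c hcab]
    linarith
  rw [abs_sub_comm, hsub_eq, abs_mul, abs_sub_comm (V y)]
  exact mul_le_mul_of_nonneg_right ((hK c hcab).trans (le_abs_self K)) (abs_nonneg _)

lemma continuousOn_ofReal_sub (hV : ∀ y ∈ Icc a b, ContDiffAt ℝ 1 V y) (μ : ℂ) :
    ContinuousOn (fun y => (V y : ℂ) - μ) (Icc a b) := fun y hy =>
  ((Complex.continuous_ofReal.continuousAt.comp (hV y hy).continuousAt).sub
    continuousAt_const).continuousWithinAt

lemma hasDerivAt_ofReal_sub {y : ℝ} (hV : ContDiffAt ℝ 1 V y) (μ : ℂ) :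
    HasDerivAt (fun y => (V y : ℂ) - μ) (↑(deriv V y) : ℂ) y :=
  (hV.differentiableAt one_ne_zero).hasDerivAt.ofReal_comp.sub_const μ

lemma intervalIntegrable_div_ofReal_sub {f : ℝ → ℝ} (hab : a ≤ b)
    (hV : ∀ y ∈ Icc a b, ContDiffAt ℝ 1 V y) (hf : ContinuousOn f (Icc a b))
    (hμ : ∀ y ∈ Icc a b, (V y : ℂ) - μ ≠ 0) :
    IntervalIntegrable (fun y => (f y : ℂ) / (V y - μ)) volume a b := by
  apply ContinuousOn.intervalIntegrable
  rw [uIcc_of_le hab]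
  exact (Complex.continuous_ofReal.comp_continuousOn hf).div (continuousOn_ofReal_sub hV μ) hμ

lemma integral_deriv_div_ofReal_sub (hab : a ≤ b) (hV : ∀ y ∈ Icc a b, ContDiffAt ℝ 1 V y)
    (hμ : ∀ y ∈ Icc a b, (V y : ℂ) - μ ∈ Complex.slitPlane) :
    ∫ y in a..b, (↑(deriv V y) : ℂ) / (V y - μ) =
      Complex.log (V b - μ) - Complex.log (V a - μ) := by
  refine intervalIntegral.integral_eq_sub_of_hasDerivAt
    (f := fun y => Complex.log (V y - μ)) (fun y hy => ?_)
    (intervalIntegrable_div_ofReal_sub hab hV (continuousOn_deriv_of_contDiffAt hV)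
      fun y hy => Complex.slitPlane_ne_zero (hμ y hy))
  rw [uIcc_of_le hab] at hy
  exact (hasDerivAt_ofReal_sub (hV y hy) μ).clog_real (hμ y hy)

lemma exists_norm_integral_mul_deriv_div_le (hab : a ≤ b)
    (hg : ∀ y ∈ Icc a b, ContDiffAt ℝ 1 g y) (hV : ∀ y ∈ Icc a b, ContDiffAt ℝ 1 V y)
    (hV' : ∀ y ∈ Icc a b, deriv V y ≠ 0) :
    ∃ C M, ∀ μ : ℂ, (∀ y ∈ Icc a b, (V y : ℂ) - μ ∈ Complex.slitPlane) →
      ‖∫ y in a..b, ((g y * deriv V y : ℝ) : ℂ) / (V y - μ)‖ ≤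
        C + M * ‖Complex.log (V b - μ) - Complex.log (V a - μ)‖ := by
  have hVc : ContinuousOn V (Icc a b) := fun y hy => (hV y hy).continuousAt.continuousWithinAt
  have hgc : ContinuousOn g (Icc a b) := fun y hy => (hg y hy).continuousAt.continuousWithinAt
  have hV'c := continuousOn_deriv_of_contDiffAt hV
  obtain ⟨K, hK0, hK⟩ := exists_forall_abs_sub_le_mul_abs_sub hg hV hV'
  obtain ⟨M, hM⟩ := isCompact_Icc.exists_bound_of_continuousOn hgc
  obtain ⟨A, hA⟩ := isCompact_Icc.exists_bound_of_continuousOn hV'c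
  refine ⟨2 * K * A * |b - a|, M, fun μ hμ => ?_⟩
  have hμ0 := fun y hy => Complex.slitPlane_ne_zero (hμ y hy)
  obtain ⟨c, hc, hnear⟩ := exists_forall_abs_sub_le_two_mul_norm_sub hab hVc μ
  have hdiff := intervalIntegrable_div_ofReal_sub (f := fun y => (g y - g c) * deriv V y) hab hV
    ((hgc.sub continuousOn_const).mul hV'c) hμ0
  have hsplit : ∫ y in a..b, ((g y * deriv V y : ℝ) : ℂ) / (V y - μ) =
      (∫ y in a..b, (((g y - g c) * deriv V y : ℝ) : ℂ) / (V y - μ)) +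
        g c * ∫ y in a..b, (↑(deriv V y) : ℂ) / (V y - μ) := by
    rw [← intervalIntegral.integral_const_mul, ← intervalIntegral.integral_add hdiff
      ((intervalIntegrable_div_ofReal_sub hab hV hV'c hμ0).const_mul _)]
    congr 1 with y
    push_cast
    ring
  have hC : 0 ≤ 2 * K * A := mul_nonneg (by positivity) ((norm_nonneg _).trans (hA c hc))
  have hbdd : ‖∫ y in a..b, (((g y - g c) * deriv V y : ℝ) : ℂ) / (V y - μ)‖ ≤
      2 * K * A * |b - a| := by
    refine norm_integral_div_le_of_norm_le_mul_norm hab hC fun y hy => ?_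
    rw [Complex.norm_real, norm_mul]
    calc ‖g y - g c‖ * ‖deriv V y‖ ≤ (K * (2 * ‖(V y : ℂ) - μ‖)) * A := by
          gcongr
          · exact (hK y hy c hc).trans (mul_le_mul_of_nonneg_left (hnear y hy) hK0)
          · exact hA y hy
      _ = 2 * K * A * ‖(V y : ℂ) - μ‖ := by ring
  rw [hsplit, integral_deriv_div_ofReal_sub hab hV hμ]
  refine (norm_add_le _ _).trans (add_le_add hbdd ?_)
  rw [norm_mul, Complex.norm_real]
  gcongr
  exact hM c hc

end CauchyIntegral

section NearZero

variable {V : ℝ → ℝ} {a b : ℝ} {μ : ℂ}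

lemma integral_inv_sq_sub_ofReal (hab : a ≤ b) (hV : ∀ y ∈ Icc a b, ContDiffAt ℝ 2 V y)
    (hV' : ∀ y ∈ Icc a b, deriv V y ≠ 0) (hμ : ∀ y ∈ Icc a b, (V y : ℂ) - μ ≠ 0) :
    ∫ y in a..b, ((μ - (V y : ℂ)) ^ 2)⁻¹ =
      (↑(deriv V a) : ℂ)⁻¹ / (V a - μ) - (↑(deriv V b) : ℂ)⁻¹ / (V b - μ) +
        ∫ y in a..b, (↑(deriv (deriv V)⁻¹ y) : ℂ) / (V y - μ) := by
  have hV1 : ∀ y ∈ Icc a b, ContDiffAt ℝ 1 V y := fun y hy => (hV y hy).of_le one_le_two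
  have hinv : ∀ y ∈ Icc a b, ContDiffAt ℝ 1 (deriv V)⁻¹ y := fun y hy =>
    ((hV y hy).derivWithin (by norm_num)).inv (hV' y hy)
  have hprim : ∀ y ∈ Icc a b, HasDerivAt (fun y => -((((deriv V)⁻¹ y : ℝ) : ℂ) / (V y - μ)))
      (((μ - (V y : ℂ)) ^ 2)⁻¹ - (↑(deriv (deriv V)⁻¹ y) : ℂ) / (V y - μ)) y := fun y hy => by
    have hV'y : (↑(deriv V y) : ℂ) ≠ 0 := Complex.ofReal_ne_zero.2 (hV' y hy)
    have hμy := hμ y hy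
    refine ((((hinv y hy).differentiableAt one_ne_zero).hasDerivAt.ofReal_comp.div
      (hasDerivAt_ofReal_sub (hV1 y hy) μ) hμy).neg).congr_deriv ?_
    rw [← neg_sub μ, neg_sq, ← neg_sub, Pi.inv_apply, Complex.ofReal_inv]
    field_simp
  have hsq : IntervalIntegrable (fun y => ((μ - (V y : ℂ)) ^ 2)⁻¹) volume a b := by
    apply ContinuousOn.intervalIntegrable
    rw [uIcc_of_le hab]
    simp_rw [← neg_sub _ μ, neg_sq]
    exact ((continuousOn_ofReal_sub hV1 μ).pow 2).inv₀ fun y hy => pow_ne_zero 2 (hμ y hy)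
  have hcauchy := intervalIntegrable_div_ofReal_sub hab hV1
    (continuousOn_deriv_of_contDiffAt hinv) hμ
  have hftc := intervalIntegral.integral_eq_sub_of_hasDerivAt
    (fun y hy => hprim y (uIcc_of_le hab ▸ hy)) (hsq.sub hcauchy)
  rw [intervalIntegral.integral_sub hsq hcauchy] at hftc
  simp only [Pi.inv_apply, Complex.ofReal_inv] at hftc
  linear_combination hftc

lemma tendsto_id_div_sub_nhds_zero {c : ℂ} (hc : c ≠ 0) :
    Tendsto (fun μ : ℂ => μ / (c - μ)) (𝓝 0) (𝓝 0) := by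
  have hcont : ContinuousAt (fun μ : ℂ => μ / (c - μ)) 0 :=
    continuousAt_id.div (by fun_prop) (by simpa using hc)
  simpa using hcont.tendsto

lemma tendsto_mul_integral_deriv_inv_deriv (hb : 0 ≤ b) (hV0 : V 0 = 0) (hVb : 0 < V b)
    (hV : ∀ y ∈ Icc 0 b, ContDiffAt ℝ 3 V y) (hV' : ∀ y ∈ Icc 0 b, deriv V y ≠ 0)
    (hnonneg : ∀ y ∈ Icc 0 b, 0 ≤ V y) :
    Tendsto (fun μ : ℂ => μ * ∫ y in (0 : ℝ)..b, (↑(deriv (deriv V)⁻¹ y) : ℂ) / (V y - μ))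
      (𝓝[cutPlane] 0) (𝓝 0) := by
  let g : ℝ → ℝ := fun y => deriv (deriv V)⁻¹ y / deriv V y
  have hV1 : ∀ y ∈ Icc 0 b, ContDiffAt ℝ 1 V y := fun y hy => (hV y hy).of_le (by norm_num)
  have hg : ∀ y ∈ Icc 0 b, ContDiffAt ℝ 1 g y := fun y hy =>
    have hV'2 : ContDiffAt ℝ 2 (deriv V) y := (hV y hy).derivWithin (by norm_num)
    ((hV'2.inv (hV' y hy)).derivWithin (by norm_num)).div (hV'2.of_le one_le_two) (hV' y hy)
  obtain ⟨C, M, hbound⟩ := exists_norm_integral_mul_deriv_div_le hb hg hV1 hV'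
  have hlog := tendsto_mul_log_sub_log_nhds_zero (Complex.ofReal_mem_slitPlane.2 hVb)
  have hmajorant : Tendsto (fun μ : ℂ => C * ‖μ‖ +
      M * ‖μ * (Complex.log (V b - μ) - Complex.log (-μ))‖) (𝓝[cutPlane] 0) (𝓝 0) := by
    simpa using ((tendsto_norm_zero.const_mul C).add (hlog.norm.const_mul M)).mono_left
      nhdsWithin_le_nhds
  refine squeeze_zero_norm' ?_ hmajorant
  filter_upwards [self_mem_nhdsWithin] with μ hμ
  have hdensity : ∫ y in (0 : ℝ)..b, (↑(deriv (deriv V)⁻¹ y) : ℂ) / (V y - μ) =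
      ∫ y in (0 : ℝ)..b, ((g y * deriv V y : ℝ) : ℂ) / (V y - μ) :=
    intervalIntegral.integral_congr fun y hy => by
      simp only [g, div_mul_cancel₀ _ (hV' y (uIcc_of_le hb ▸ hy))]
  have hbound_μ := hbound μ fun y hy => ofReal_sub_mem_slitPlane hμ (hnonneg y hy)
  rw [hV0, Complex.ofReal_zero, zero_sub] at hbound_μ
  rw [hdensity, norm_mul, norm_mul]
  linarith [mul_le_mul_of_nonneg_left hbound_μ (norm_nonneg μ)]

lemma tendsto_mul_integral_inv_sq (hb : 0 ≤ b) (hV0 : V 0 = 0) (hVb : 0 < V b)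
    (hV : ∀ y ∈ Icc 0 b, ContDiffAt ℝ 3 V y) (hV' : ∀ y ∈ Icc 0 b, deriv V y ≠ 0)
    (hnonneg : ∀ y ∈ Icc 0 b, 0 ≤ V y) :
    Tendsto (fun μ : ℂ => μ * ∫ y in (0 : ℝ)..b, ((μ - (V y : ℂ)) ^ 2)⁻¹)
      (𝓝[cutPlane] 0) (𝓝 ((-1 / deriv V 0 : ℝ) : ℂ)) := by
  have hend : Tendsto (fun μ : ℂ => μ / (V b - μ)) (𝓝[cutPlane] 0) (𝓝 0) :=
    (tendsto_id_div_sub_nhds_zero (Complex.ofReal_ne_zero.2 hVb.ne')).mono_left nhdsWithin_le_nhds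
  have hlim : Tendsto (fun μ : ℂ => -(↑(deriv V 0) : ℂ)⁻¹ - (↑(deriv V b) : ℂ)⁻¹ * (μ / (V b - μ)) +
      μ * ∫ y in (0 : ℝ)..b, (↑(deriv (deriv V)⁻¹ y) : ℂ) / (V y - μ))
      (𝓝[cutPlane] 0) (𝓝 ((-1 / deriv V 0 : ℝ) : ℂ)) := by
    simpa [neg_div] using (tendsto_const_nhds.sub (hend.const_mul _)).add
      (tendsto_mul_integral_deriv_inv_deriv hb hV0 hVb hV hV' hnonneg)
  refine hlim.congr' ?_
  filter_upwards [self_mem_nhdsWithin] with μ hμ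
  have hsub : ∀ y ∈ Icc 0 b, (V y : ℂ) - μ ≠ 0 := fun y hy =>
    Complex.slitPlane_ne_zero (ofReal_sub_mem_slitPlane hμ (hnonneg y hy))
  have hμ0 : μ ≠ 0 := by simpa [hV0] using hsub 0 (left_mem_Icc.2 hb)
  rw [integral_inv_sq_sub_ofReal hb (fun y hy => (hV y hy).of_le (by norm_num)) hV' hsub, hV0,
    Complex.ofReal_zero, zero_sub]
  field_simp

end NearZero

section Tail

variable {V : ℝ → ℝ} {b : ℝ} {μ : ℂ}

lemma integrableOn_Ioi_inv_sq_of_monotoneOn (hmono : MonotoneOn V (Ici b)) (hVb : 0 < V b)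
    (hint : IntegrableAtFilter (fun y => (V y ^ 2)⁻¹) atTop) :
    IntegrableOn (fun y => (V y ^ 2)⁻¹) (Ioi b) := by
  have hanti : AntitoneOn (fun y => (V y ^ 2)⁻¹) (Ici b) := fun x hx y hy hxy => by
    have hVx : 0 < V x := hVb.trans_le (hmono self_mem_Ici hx hx)
    have hVxy : V x ≤ V y := hmono hx hy hxy
    dsimp only
    gcongr
  refine (integrableOn_Ici_iff_integrableAtFilter_atTop.2 ⟨hint, ?_⟩).mono_set Ioi_subset_Ici_self
  exact (locallyIntegrableOn_iff isClosed_Ici.isLocallyClosed).2 fun k hk hkc =>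
    (hanti.mono hk).integrableOn_isCompact hkc

lemma norm_inv_sq_sub_ofReal_le {v : ℝ} (hv : 0 < v) (hμ : ‖μ‖ ≤ v / 2) :
    ‖((μ - (v : ℂ)) ^ 2)⁻¹‖ ≤ 4 * (v ^ 2)⁻¹ := by
  have hhalf : v / 2 ≤ ‖μ - (v : ℂ)‖ := by
    have hle := norm_sub_norm_le (v : ℂ) μ
    rw [norm_sub_rev, Complex.norm_of_nonneg hv.le] at hle
    linarith
  calc ‖((μ - (v : ℂ)) ^ 2)⁻¹‖ = (‖μ - (v : ℂ)‖ ^ 2)⁻¹ := by rw [norm_inv, norm_pow]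
    _ ≤ ((v / 2) ^ 2)⁻¹ := by gcongr
    _ = 4 * (v ^ 2)⁻¹ := by rw [div_pow, inv_div]; ring

lemma ae_norm_inv_sq_sub_ofReal_le (hmono : MonotoneOn V (Ici b)) (hVb : 0 < V b)
    (hμ : ‖μ‖ ≤ V b / 2) :
    ∀ᵐ y ∂volume.restrict (Ioi b), ‖((μ - (V y : ℂ)) ^ 2)⁻¹‖ ≤ 4 * (V y ^ 2)⁻¹ := by
  filter_upwards [ae_restrict_mem measurableSet_Ioi] with y hy
  have hVy : V b ≤ V y := hmono self_mem_Ici (mem_Ici_of_Ioi hy) (le_of_lt hy)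
  exact norm_inv_sq_sub_ofReal_le (hVb.trans_le hVy) (by linarith)

lemma integrableOn_Ioi_inv_sq_sub_ofReal (hmono : MonotoneOn V (Ici b)) (hVb : 0 < V b)
    (hint : IntegrableOn (fun y => (V y ^ 2)⁻¹) (Ioi b)) (hμ : ‖μ‖ ≤ V b / 2) :
    IntegrableOn (fun y => ((μ - (V y : ℂ)) ^ 2)⁻¹) (Ioi b) := by
  have hmeas : AEMeasurable V (volume.restrict (Ioi b)) :=
    aemeasurable_restrict_of_monotoneOn measurableSet_Ioi (hmono.mono Ioi_subset_Ici_self)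
  refine (hint.const_mul 4).mono' (AEMeasurable.aestronglyMeasurable ?_)
    (ae_norm_inv_sq_sub_ofReal_le hmono hVb hμ)
  fun_prop

lemma tendsto_mul_integral_Ioi_inv_sq (hmono : MonotoneOn V (Ici b)) (hVb : 0 < V b)
    (hint : IntegrableOn (fun y => (V y ^ 2)⁻¹) (Ioi b)) :
    Tendsto (fun μ : ℂ => μ * ∫ y in Ioi b, ((μ - (V y : ℂ)) ^ 2)⁻¹) (𝓝 0) (𝓝 0) := by
  refine tendsto_id.zero_mul_isBoundedUnder_le
    (isBoundedUnder_of_eventually_le (a := ∫ y in Ioi b, 4 * (V y ^ 2)⁻¹) ?_)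
  filter_upwards [Metric.closedBall_mem_nhds (0 : ℂ) (half_pos hVb)] with μ hμ
  exact norm_integral_le_of_norm_le (hint.const_mul 4)
    (ae_norm_inv_sq_sub_ofReal_le hmono hVb (mem_closedBall_zero_iff.1 hμ))

end Tail

section LinearGrowth

variable {V : ℝ → ℝ} {A : ℝ}

lemma isBigO_id_of_tendsto_sub_id (hV : Tendsto (fun z => V z - z) atTop (𝓝 A)) :
    (fun z => z) =O[atTop] V := by
  have hequiv : V ~[atTop] (fun z => z) :=
    (hV.isBigO_one ℝ).trans_isLittleO (isLittleO_const_id_atTop 1)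
  exact hequiv.symm.isBigO

lemma integrableAtFilter_inv_sq_of_tendsto_sub_id (hVm : Measurable V)
    (hV : Tendsto (fun z => V z - z) atTop (𝓝 A)) :
    IntegrableAtFilter (fun y => (V y ^ 2)⁻¹) atTop := by
  have hinv : (fun y => (V y ^ 2)⁻¹) =O[atTop] fun y : ℝ => (y ^ 2)⁻¹ :=
    ((isBigO_id_of_tendsto_sub_id hV).pow 2).inv_rev <| (eventually_ne_atTop 0).mono fun y hy h =>
      absurd h (pow_ne_zero 2 hy)
  have hrpow : IntegrableAtFilter (fun y : ℝ => (y ^ 2)⁻¹) atTop := by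
    simpa [Real.rpow_neg_ofNat, zpow_neg] using
      (integrableAtFilter_rpow_atTop_iff (s := -2)).2 (by norm_num)
  exact hinv.integrableAtFilter
    (hVm.pow_const 2).inv.aestronglyMeasurable.stronglyMeasurableAtFilter hrpow

end LinearGrowth

section Limit

variable {V : ℝ → ℝ} {b : ℝ} {μ : ℂ}

lemma PhiInf_eq_add (hb : 0 ≤ b) (hV : ContinuousOn V (Icc 0 b))
    (hsub : ∀ y ∈ Icc 0 b, μ - (V y : ℂ) ≠ 0)
    (htail : IntegrableOn (fun y => ((μ - (V y : ℂ)) ^ 2)⁻¹) (Ioi b)) :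
    PhiInf V μ = μ * (∫ y in (0 : ℝ)..b, ((μ - (V y : ℂ)) ^ 2)⁻¹) +
      μ * ∫ y in Ioi b, ((μ - (V y : ℂ)) ^ 2)⁻¹ := by
  have hcont : ContinuousOn (fun y => ((μ - (V y : ℂ)) ^ 2)⁻¹) (uIcc 0 b) := by
    rw [uIcc_of_le hb]
    exact ((continuousOn_const.sub (Complex.continuous_ofReal.comp_continuousOn hV)).pow 2).inv₀
      fun y hy => pow_ne_zero 2 (hsub y hy)
  rw [PhiInf, ← intervalIntegral.integral_interval_add_Ioi' hcont.intervalIntegrable htail, mul_add]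

lemma exists_pos_forall_Icc_contDiffAt_deriv_pos (hV : ContDiffAt ℝ 3 V 0) (hV' : 0 < deriv V 0) :
    ∃ b > 0, ∀ y ∈ Icc 0 b, ContDiffAt ℝ 3 V y ∧ 0 < deriv V y := by
  have hderiv : ContinuousAt (deriv V) 0 :=
    (hV.derivWithin (m := 2) (by norm_num)).continuousAt
  have hev := (hV.eventually (by simp)).and (hderiv.eventually_const_lt hV')
  obtain ⟨b, hb, hball⟩ := Metric.nhds_basis_closedBall.eventually_iff.1 hev
  refine ⟨b, hb, fun y hy => hball ?_⟩
  rw [Real.closedBall_eq_Icc]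
  exact ⟨by linarith [hy.1], by linarith [hy.2]⟩

theorem PhiInf_re_tendsto_at_zero_general (hV : ContDiffAt ℝ 3 V 0) (hV0 : V 0 = 0)
    (hV' : 0 < deriv V 0) (hmono : MonotoneOn V (Ici 0))
    (hint : IntegrableAtFilter (fun y => (V y ^ 2)⁻¹) atTop) :
    Tendsto (PhiInf V) (𝓝[cutPlane] 0) (𝓝 ((-1 / deriv V 0 : ℝ) : ℂ)) := by
  obtain ⟨b, hb, hnear⟩ := exists_pos_forall_Icc_contDiffAt_deriv_pos hV hV'
  have hcont : ContinuousOn V (Icc 0 b) := fun y hy =>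
    (hnear y hy).1.continuousAt.continuousWithinAt
  have hnonneg : ∀ y ∈ Icc 0 b, 0 ≤ V y := fun y hy => hV0 ▸ hmono self_mem_Ici hy.1 hy.1
  have hVb : 0 < V b := hV0 ▸ strictMonoOn_of_deriv_pos (convex_Icc 0 b) hcont
    (fun y hy => (hnear y (interior_subset hy)).2) (left_mem_Icc.2 hb.le) (right_mem_Icc.2 hb.le) hb
  have hmono_b : MonotoneOn V (Ici b) := hmono.mono (Ici_subset_Ici.2 hb.le)
  have hint_b := integrableOn_Ioi_inv_sq_of_monotoneOn hmono_b hVb hint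
  have hsum := (tendsto_mul_integral_inv_sq hb.le hV0 hVb (fun y hy => (hnear y hy).1)
    (fun y hy => (hnear y hy).2.ne') hnonneg).add
      ((tendsto_mul_integral_Ioi_inv_sq hmono_b hVb hint_b).mono_left nhdsWithin_le_nhds)
  rw [add_zero] at hsum
  refine hsum.congr' ?_
  filter_upwards [self_mem_nhdsWithin,
    nhdsWithin_le_nhds (Metric.closedBall_mem_nhds (0 : ℂ) (half_pos hVb))] with μ hμ hμb
  refine (PhiInf_eq_add hb.le hcont (fun y hy => ?_) (integrableOn_Ioi_inv_sq_sub_ofReal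
    hmono_b hVb hint_b (mem_closedBall_zero_iff.1 hμb))).symm
  rw [← neg_sub, neg_ne_zero]
  exact Complex.slitPlane_ne_zero (ofReal_sub_mem_slitPlane hμ (hnonneg y hy))

end Limit

/-- `Re Φ_∞(μ) → -1/V_s'(0) < 0` as `μ → 0` in `ℂ ∖ [0,∞)`. -/
theorem PhiInf_re_tendsto_at_zero
    (Vs : ℝ → ℝ) (As : ℝ)
    (hVs_smooth : ContDiff ℝ (⊤ : ℕ∞) Vs)
    (hVs0 : Vs 0 = 0)
    (hVs'pos : ∀ z : ℝ, 0 ≤ z → 0 < deriv Vs z)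
    (hdecay : ∀ p : ℕ, Tendsto (fun z : ℝ => z ^ p * (Vs z - z - As)) atTop (nhds 0))
    (hderiv_decay : ∀ n : ℕ, 1 ≤ n → ∀ p : ℕ,
      Tendsto (fun z : ℝ => z ^ p * iteratedDeriv n (fun w => Vs w - w) z) atTop (nhds 0))
    :
    Tendsto (fun μ : ℂ => (PhiInf Vs μ).re)
        (nhdsWithin 0 {μ : ℂ | μ.im ≠ 0 ∨ μ.re < 0}) (nhds (-1 / deriv Vs 0))
      ∧ -1 / deriv Vs 0 < 0 := by
  have hmono : MonotoneOn Vs (Ici 0) := (strictMonoOn_of_deriv_pos (convex_Ici 0)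
    hVs_smooth.continuous.continuousOn fun y hy => hVs'pos y (interior_subset hy)).monotoneOn
  have hlinear : Tendsto (fun z => Vs z - z) atTop (𝓝 As) := by
    simpa using (hdecay 0).add_const As
  have hlim := PhiInf_re_tendsto_at_zero_general (contDiff_infty.1 hVs_smooth 3).contDiffAt
    hVs0 (hVs'pos 0 le_rfl) hmono
    (integrableAtFilter_inv_sq_of_tendsto_sub_id hVs_smooth.continuous.measurable hlinear)
  exact ⟨(Complex.continuous_re.tendsto _).comp hlim,
    div_neg_of_neg_of_pos neg_one_lt_zero (hVs'pos 0 le_rfl)⟩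
end

section
/- For every μ ∈ ℂ ∖ [0,∞), Φ_∞(μ) + 1 = ∫₀^∞ g(u)·u/(μ − u) du, where the integral on the right converges absolutely. In particular this uses the elementary identity −1/V_s'(0) + ∫₀^∞ V_s''(y)/(V_s'(y))² dy = −1, valid since V_s'(y) → 1 as y → ∞. -/
open MeasureTheory Filter

/-!
With `V = V_s`, the function `F = V / (V' (μ - V))` vanishes at `0`, tends to `-1` at infinity, and
`F' = μ / (μ - V)² - (V'' / V'²) · V / (μ - V)`. Integrating `F'` over the half line, the first term
gives `Φ_∞(μ)`, and the substitution `u = V(y)` turns the second into `∫ g(u) u / (μ - u) du`.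
Absolute convergence comes from `1 + u ≤ C |μ - u|` for `u ≥ 0`.
-/

section IteratedDeriv

variable {𝕜 : Type*} [NontriviallyNormedField 𝕜]

lemma iteratedDeriv_one_sub_id {f : 𝕜 → 𝕜} (hf : Differentiable 𝕜 f) :
    iteratedDeriv 1 (fun x => f x - x) = fun x => deriv f x - 1 := by
  ext x
  rw [iteratedDeriv_one]
  exact ((hf x).hasDerivAt.sub (hasDerivAt_id x)).deriv

lemma iteratedDeriv_two_sub_id {f : 𝕜 → 𝕜} (hf : Differentiable 𝕜 f) :
    iteratedDeriv 2 (fun x => f x - x) = deriv (deriv f) := by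
  rw [iteratedDeriv_succ, iteratedDeriv_one_sub_id hf]
  ext x
  exact deriv_sub_const 1

end IteratedDeriv

section HalfLine

open Set Topology

lemma exists_gt_forall_le_of_tendsto_atTop {f : ℝ → ℝ} {a l c : ℝ} (hf : ContinuousOn f (Ici a))
    (hl : ∀ x ∈ Ici a, l < f x) (hlim : Tendsto f atTop (𝓝 c)) (hc : l < c) :
    ∃ m, l < m ∧ ∀ x ∈ Ici a, m ≤ f x := by
  obtain ⟨d, hld, hdc⟩ := exists_between hc
  obtain ⟨b, hb⟩ := eventually_atTop.1 (hlim.eventually (eventually_gt_nhds hdc))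
  obtain ⟨m, hlm, hm⟩ := (isCompact_Icc (a := a) (b := b)).exists_forall_le'
    (hf.mono Icc_subset_Ici_self) (a := l) fun x hx => hl x hx.1
  refine ⟨min m d, lt_min hlm hld, fun x hx => ?_⟩
  rcases le_total x b with hxb | hbx
  · exact (min_le_left m d).trans (hm x ⟨hx, hxb⟩)
  · exact (min_le_right m d).trans (hb x hbx).le

lemma mul_sub_le_sub_of_le_hasDerivWithinAt_Ici {f f' : ℝ → ℝ} {a m : ℝ}
    (hf : ∀ x ∈ Ici a, HasDerivWithinAt f (f' x) (Ici a) x) (hm : ∀ x ∈ Ioi a, m ≤ f' x) :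
    ∀ x ∈ Ici a, m * (x - a) ≤ f x - f a := by
  have hderiv : ∀ x ∈ interior (Ici a), HasDerivAt f (f' x) x := fun x hx =>
    (hf x (interior_subset hx)).hasDerivAt (mem_interior_iff_mem_nhds.1 hx)
  intro x hx
  refine (convex_Ici a).mul_sub_le_image_sub_of_le_deriv
    (fun y hy => (hf y hy).continuousWithinAt)
    (fun y hy => (hderiv y hy).differentiableAt.differentiableWithinAt) (fun y hy => ?_)
    a self_mem_Ici x hx hx
  rw [(hderiv y hy).deriv]
  exact hm y (by rwa [interior_Ici] at hy)

lemma integral_Ioi_of_hasDerivWithinAt_Ici_of_tendsto {E : Type*} [NormedAddCommGroup E]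
    [NormedSpace ℝ E] [CompleteSpace E] {f f' : ℝ → E} {a : ℝ} {l : E}
    (hf : ∀ x ∈ Ici a, HasDerivWithinAt f (f' x) (Ici a) x) (hf' : IntegrableOn f' (Ioi a))
    (hlim : Tendsto f atTop (𝓝 l)) : ∫ x in Ioi a, f' x = l - f a :=
  integral_Ioi_of_hasDerivAt_of_tendsto (hf a self_mem_Ici).continuousWithinAt
    (fun x hx => (hf x (Ioi_subset_Ici_self hx)).hasDerivAt (Ici_mem_nhds hx)) hf' hlim

lemma integrableOn_Ioi_of_tendsto_rpow_smul {E : Type*} [NormedAddCommGroup E] [NormedSpace ℝ E]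
    {f : ℝ → E} {a p : ℝ} {l : E} (hp : 1 < p) (hf : ContinuousOn f (Ici a))
    (hlim : Tendsto (fun x => x ^ p • f x) atTop (𝓝 l)) : IntegrableOn f (Ioi a) := by
  have hO : f =O[atTop] fun x : ℝ => x ^ (-p) := by
    refine ((Asymptotics.isBigO_refl (fun x : ℝ => x ^ (-p)) atTop).smul
      (hlim.isBigO_one ℝ)).congr' ?_ (by simp)
    filter_upwards [eventually_gt_atTop 0] with x hx
    rw [Real.rpow_neg hx.le, inv_smul_smul₀ (Real.rpow_pos_of_pos hx p).ne']
  refine IntegrableOn.mono_set ?_ Ioi_subset_Ici_self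
  exact (hf.locallyIntegrableOn measurableSet_Ici).integrableOn_of_isBigO_atTop hO
    ⟨Ioi 1, Ioi_mem_atTop 1, integrableOn_Ioi_rpow_of_lt (by linarith) one_pos⟩

lemma integrableOn_div_of_le {f h : ℝ → ℝ} {s : Set ℝ} {m : ℝ} (hs : MeasurableSet s)
    (hf : IntegrableOn f s) (hh : ContinuousOn h s) (hm : 0 < m) (hmh : ∀ x ∈ s, m ≤ h x) :
    IntegrableOn (fun x => f x / h x) s := by
  simp only [div_eq_mul_inv]
  refine Integrable.mul_bdd (c := m⁻¹) hf
    ((hh.inv₀ fun x hx => (hm.trans_le (hmh x hx)).ne').aestronglyMeasurable hs) ?_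
  filter_upwards [ae_restrict_mem hs] with x hx
  rw [norm_inv, Real.norm_of_nonneg (hm.le.trans (hmh x hx))]
  exact inv_anti₀ hm (hmh x hx)

lemma integral_Ioi_div_sq {f f' : ℝ → ℝ} {a c : ℝ}
    (hf : ∀ x ∈ Ici a, HasDerivWithinAt f (f' x) (Ici a) x) (hne : ∀ x ∈ Ici a, f x ≠ 0)
    (hint : IntegrableOn (fun x => f' x / f x ^ 2) (Ioi a)) (hc : c ≠ 0)
    (hlim : Tendsto f atTop (𝓝 c)) : ∫ x in Ioi a, f' x / f x ^ 2 = (f a)⁻¹ - c⁻¹ := by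
  have hderiv : ∀ x ∈ Ici a, HasDerivWithinAt (fun x => -(f x)⁻¹) (f' x / f x ^ 2) (Ici a) x :=
    fun x hx => ((hf x hx).fun_inv (hne x hx)).fun_neg.congr_deriv (by ring)
  rw [integral_Ioi_of_hasDerivWithinAt_Ici_of_tendsto hderiv hint (hlim.inv₀ hc).neg]
  ring

lemma strictMonoOn_Ici_of_hasDerivWithinAt_pos {f f' : ℝ → ℝ} {a : ℝ}
    (hf : ∀ x ∈ Ici a, HasDerivWithinAt f (f' x) (Ici a) x) (hpos : ∀ x ∈ Ioi a, 0 < f' x) :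
    StrictMonoOn f (Ici a) :=
  strictMonoOn_of_hasDerivWithinAt_pos (convex_Ici a) (fun x hx => (hf x hx).continuousWithinAt)
    (fun x hx => (hf x (interior_subset hx)).mono interior_subset)
    (by simpa only [interior_Ici] using hpos)

lemma image_Ioi_of_hasDerivWithinAt_pos {f f' : ℝ → ℝ} {a : ℝ}
    (hf : ∀ x ∈ Ici a, HasDerivWithinAt f (f' x) (Ici a) x) (hpos : ∀ x ∈ Ioi a, 0 < f' x)
    (htop : Tendsto f atTop atTop) : f '' Ioi a = Ioi (f a) :=
  ContinuousOn.image_Ioi_of_strictMonoOn (fun x hx => (hf x hx).continuousWithinAt)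
    (strictMonoOn_Ici_of_hasDerivWithinAt_pos hf hpos) htop

lemma integrableOn_Ioi_iff_deriv_smul_comp {E : Type*} [NormedAddCommGroup E] [NormedSpace ℝ E]
    {f f' : ℝ → ℝ} {a : ℝ} (hf : ∀ x ∈ Ici a, HasDerivWithinAt f (f' x) (Ici a) x)
    (hpos : ∀ x ∈ Ioi a, 0 < f' x) (htop : Tendsto f atTop atTop) (h : ℝ → E) :
    IntegrableOn h (Ioi (f a)) ↔ IntegrableOn (fun x => f' x • h (f x)) (Ioi a) := by
  rw [← image_Ioi_of_hasDerivWithinAt_pos hf hpos htop]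
  exact integrableOn_image_iff_integrableOn_deriv_smul_of_monotoneOn measurableSet_Ioi
    (fun x hx => (hf x (Ioi_subset_Ici_self hx)).mono Ioi_subset_Ici_self)
    ((strictMonoOn_Ici_of_hasDerivWithinAt_pos hf hpos).monotoneOn.mono Ioi_subset_Ici_self) h

lemma integral_Ioi_eq_integral_deriv_smul_comp {E : Type*} [NormedAddCommGroup E]
    [NormedSpace ℝ E] {f f' : ℝ → ℝ} {a : ℝ}
    (hf : ∀ x ∈ Ici a, HasDerivWithinAt f (f' x) (Ici a) x) (hpos : ∀ x ∈ Ioi a, 0 < f' x)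
    (htop : Tendsto f atTop atTop) (h : ℝ → E) :
    ∫ u in Ioi (f a), h u = ∫ x in Ioi a, f' x • h (f x) := by
  rw [← image_Ioi_of_hasDerivWithinAt_pos hf hpos htop]
  exact integral_image_eq_integral_deriv_smul_of_monotoneOn measurableSet_Ioi
    (fun x hx => (hf x (Ioi_subset_Ici_self hx)).mono Ioi_subset_Ici_self)
    ((strictMonoOn_Ici_of_hasDerivWithinAt_pos hf hpos).monotoneOn.mono Ioi_subset_Ici_self) h

end HalfLine

section Resolvent

open Set Topology

lemma exists_one_add_norm_le_mul_norm_sub {E : Type*} [SeminormedAddCommGroup E] {s : Set E}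
    {x : E} (hs : IsClosed s) (hx : x ∉ s) : ∃ C, ∀ y ∈ s, 1 + ‖y‖ ≤ C * ‖x - y‖ := by
  obtain ⟨δ, hδ, hball⟩ := Metric.isOpen_iff.1 hs.isOpen_compl x hx
  refine ⟨(1 + ‖x‖) / δ + 1, fun y hy => ?_⟩
  have hδy : δ ≤ ‖x - y‖ := by
    rw [← dist_eq_norm, dist_comm]
    exact not_lt.1 fun h => hball h hy
  calc 1 + ‖y‖ ≤ (1 + ‖x‖) / δ * δ + ‖x - y‖ := by
        rw [div_mul_cancel₀ _ hδ.ne']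
        linarith [norm_le_norm_add_norm_sub x y]
    _ ≤ (1 + ‖x‖) / δ * ‖x - y‖ + ‖x - y‖ := by gcongr
    _ = ((1 + ‖x‖) / δ + 1) * ‖x - y‖ := by ring

variable {μ : ℂ}

lemma sub_ofReal_ne_zero (hμ : μ.im ≠ 0 ∨ μ.re < 0) {u : ℝ} (hu : 0 ≤ u) : μ - u ≠ 0 := by
  rw [sub_ne_zero]
  rintro rfl
  simp [hu.not_gt] at hμ

lemma exists_one_add_le_mul_norm_sub_ofReal (hμ : μ.im ≠ 0 ∨ μ.re < 0) :
    ∃ C, ∀ u : ℝ, 0 ≤ u → 1 + u ≤ C * ‖μ - u‖ := by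
  have hclosed : IsClosed (Complex.ofReal '' Ici 0) :=
    Complex.isometry_ofReal.isClosedEmbedding.isClosedMap _ isClosed_Ici
  have hmem : μ ∉ Complex.ofReal '' Ici 0 := by
    rintro ⟨u, hu, rfl⟩
    exact sub_ofReal_ne_zero hμ hu (sub_self _)
  obtain ⟨C, hC⟩ := exists_one_add_norm_le_mul_norm_sub hclosed hmem
  refine ⟨C, fun u hu => ?_⟩
  simpa [abs_of_nonneg hu] using hC u (mem_image_of_mem _ hu)

lemma tendsto_ofReal_div_sub_ofReal_atTop (μ : ℂ) :
    Tendsto (fun u : ℝ => (u : ℂ) / (μ - u)) atTop (𝓝 (-1)) := by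
  have hsub : Tendsto (fun u : ℝ => μ - u) atTop (Bornology.cobounded ℂ) :=
    (tendsto_const_sub_cobounded μ).comp (RCLike.tendsto_ofReal_atTop_cobounded ℂ)
  have hinv : Tendsto (fun u : ℝ => μ * (μ - u)⁻¹ - 1) atTop (𝓝 (μ * 0 - 1)) :=
    ((tendsto_inv₀_cobounded.comp hsub).const_mul μ).sub_const 1
  rw [mul_zero, zero_sub] at hinv
  refine hinv.congr' ?_
  filter_upwards [hsub.eventually_ne_cobounded 0] with u hu
  field_simp
  ring

lemma integrableOn_inv_sub_sq_of_mul_le {V : ℝ → ℝ} {m : ℝ} (hμ : μ.im ≠ 0 ∨ μ.re < 0)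
    (hV : ContinuousOn V (Ici 0)) (hm : 0 < m) (hmV : ∀ y ∈ Ici 0, m * y ≤ V y) :
    IntegrableOn (fun y => ((μ - V y) ^ 2)⁻¹) (Ioi 0) := by
  have hV0 : ∀ y ∈ Ici 0, 0 ≤ V y := fun y hy => (mul_nonneg hm.le hy).trans (hmV y hy)
  obtain ⟨C, hC⟩ := exists_one_add_le_mul_norm_sub_ofReal hμ
  have hdom : IntegrableOn (fun y => C ^ 2 * (1 + (m * y) ^ 2)⁻¹) (Ioi 0) :=
    ((integrable_inv_one_add_sq.comp_mul_left' hm.ne').const_mul _).integrableOn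
  have hcont : ContinuousOn (fun y => ((μ - V y) ^ 2)⁻¹) (Ici 0) :=
    ((continuousOn_const.sub (Complex.continuous_ofReal.comp_continuousOn hV)).pow 2).inv₀
      fun y hy => pow_ne_zero 2 (sub_ofReal_ne_zero hμ (hV0 y hy))
  refine Integrable.mono' hdom
    ((hcont.mono Ioi_subset_Ici_self).aestronglyMeasurable measurableSet_Ioi) ?_
  filter_upwards [ae_restrict_mem measurableSet_Ioi] with y hy
  have hy0 : y ∈ Ici 0 := Ioi_subset_Ici_self hy
  have hmy : 0 ≤ m * y := mul_nonneg hm.le hy0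
  have hnorm : 0 < ‖μ - V y‖ := norm_pos_iff.2 (sub_ofReal_ne_zero hμ (hV0 y hy0))
  rw [norm_inv, norm_pow, ← div_eq_mul_inv, inv_eq_one_div,
    div_le_div_iff₀ (by positivity) (by positivity), one_mul]
  calc 1 + (m * y) ^ 2 ≤ (1 + m * y) ^ 2 := by nlinarith
    _ ≤ (1 + V y) ^ 2 := by gcongr; exact hmV y hy0
    _ ≤ (C * ‖μ - V y‖) ^ 2 := pow_le_pow_left₀ (by linarith [hV0 y hy0]) (hC _ (hV0 y hy0)) 2
    _ = C ^ 2 * ‖μ - V y‖ ^ 2 := mul_pow _ _ _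

lemma integrableOn_smul_div_sub {V : ℝ → ℝ} {q : ℝ → ℝ} {s : Set ℝ} (hμ : μ.im ≠ 0 ∨ μ.re < 0)
    (hs : MeasurableSet s) (hV : ContinuousOn V s) (hV0 : ∀ y ∈ s, 0 ≤ V y)
    (hq : IntegrableOn q s) : IntegrableOn (fun y => q y • ((V y : ℂ) / (μ - V y))) s := by
  obtain ⟨C, hC⟩ := exists_one_add_le_mul_norm_sub_ofReal hμ
  have hVC : ContinuousOn (fun y => (V y : ℂ)) s := Complex.continuous_ofReal.comp_continuousOn hV
  have hcont : ContinuousOn (fun y => (V y : ℂ) / (μ - V y)) s :=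
    hVC.div (continuousOn_const.sub hVC) fun y hy => sub_ofReal_ne_zero hμ (hV0 y hy)
  refine Integrable.smul_bdd hq C (hcont.aestronglyMeasurable hs) ?_
  filter_upwards [ae_restrict_mem hs] with y hy
  rw [norm_div, Complex.norm_of_nonneg (hV0 y hy),
    div_le_iff₀ (norm_pos_iff.2 (sub_ofReal_ne_zero hμ (hV0 y hy)))]
  linarith [hC (V y) (hV0 y hy)]

end Resolvent

section ShearProfile

open Set Topology

variable {V V' V'' g : ℝ → ℝ} {μ : ℂ} {c : ℝ}

lemma hasDerivWithinAt_inv_deriv_mul_div_sub {s : Set ℝ} {y : ℝ}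
    (hV : HasDerivWithinAt V (V' y) s y) (hV' : HasDerivWithinAt V' (V'' y) s y)
    (hne : V' y ≠ 0) (hμ : μ - V y ≠ 0) :
    HasDerivWithinAt (fun y => (V' y : ℂ)⁻¹ * (V y / (μ - V y)))
      (μ * ((μ - V y) ^ 2)⁻¹ - (V'' y / V' y ^ 2) • ((V y : ℂ) / (μ - V y))) s y := by
  have hneC : (V' y : ℂ) ≠ 0 := Complex.ofReal_ne_zero.2 hne
  refine ((hV'.ofReal_comp.fun_inv hneC).fun_mul
    (hV.ofReal_comp.fun_div (hV.ofReal_comp.const_sub μ) hμ)).congr_deriv ?_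
  rw [Complex.real_smul]
  push_cast
  field_simp
  ring

lemma PhiInf_add_inv_eq_integral_smul_div_sub
    (hV : ∀ y ∈ Ici 0, HasDerivWithinAt V (V' y) (Ici 0) y)
    (hV' : ∀ y ∈ Ici 0, HasDerivWithinAt V' (V'' y) (Ici 0) y) (hV0 : V 0 = 0)
    (hne : ∀ y ∈ Ici 0, V' y ≠ 0) (hμ : ∀ y ∈ Ici 0, μ - V y ≠ 0)
    (hVtop : Tendsto V atTop atTop) (hc : c ≠ 0) (hlim : Tendsto V' atTop (𝓝 c))
    (hint_sq : IntegrableOn (fun y => ((μ - V y) ^ 2)⁻¹) (Ioi 0))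
    (hint : IntegrableOn (fun y => (V'' y / V' y ^ 2) • ((V y : ℂ) / (μ - V y))) (Ioi 0)) :
    PhiInf V μ + (c : ℂ)⁻¹ =
      ∫ y in Ioi (0 : ℝ), (V'' y / V' y ^ 2) • ((V y : ℂ) / (μ - V y)) := by
  have htendsto : Tendsto (fun y => (V' y : ℂ)⁻¹ * (V y / (μ - V y))) atTop
      (𝓝 ((c : ℂ)⁻¹ * (-1))) :=
    (hlim.ofReal.inv₀ (Complex.ofReal_ne_zero.2 hc)).mul
      ((tendsto_ofReal_div_sub_ofReal_atTop μ).comp hVtop)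
  have hftc := integral_Ioi_of_hasDerivWithinAt_Ici_of_tendsto
    (fun y hy => hasDerivWithinAt_inv_deriv_mul_div_sub (hV y hy) (hV' y hy) (hne y hy) (hμ y hy))
    ((hint_sq.const_mul μ).sub hint) htendsto
  rw [integral_sub (hint_sq.const_mul μ) hint, integral_const_mul, hV0] at hftc
  simp only [Complex.ofReal_zero, zero_div, mul_zero, sub_zero, mul_neg, mul_one] at hftc
  rw [PhiInf, sub_eq_iff_eq_add.1 hftc]
  ring

lemma deriv_smul_weight_comp_eqOn (hne : ∀ y ∈ Ioi 0, V' y ≠ 0)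
    (hg : ∀ y ∈ Ioi 0, g (V y) = V'' y / V' y ^ 3) :
    EqOn (fun y => V' y • ((g (V y) : ℂ) * V y / (μ - V y)))
      (fun y => (V'' y / V' y ^ 2) • ((V y : ℂ) / (μ - V y))) (Ioi 0) := by
  intro y hy
  have hweight : V' y * g (V y) = V'' y / V' y ^ 2 := by
    have := hne y hy
    rw [hg y hy]
    field_simp
  simp only [← hweight, Complex.real_smul, Complex.ofReal_mul]
  ring

theorem PhiInf_add_one_eq_general
    (hV : ∀ y ∈ Ici 0, HasDerivWithinAt V (V' y) (Ici 0) y)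
    (hV' : ∀ y ∈ Ici 0, HasDerivWithinAt V' (V'' y) (Ici 0) y) (hV0 : V 0 = 0)
    (hpos : ∀ y ∈ Ici 0, 0 < V' y) (hc : 0 < c) (hlim : Tendsto V' atTop (𝓝 c))
    (hV''int : IntegrableOn V'' (Ioi 0)) (hg : ∀ y ∈ Ioi 0, g (V y) = V'' y / V' y ^ 3) :
    IntegrableOn (fun y => V'' y / V' y ^ 2) (Ioi 0) ∧
    (-1 / V' 0 + ∫ y in Ioi (0 : ℝ), V'' y / V' y ^ 2 = -1 / c) ∧
    ∀ μ : ℂ, (μ.im ≠ 0 ∨ μ.re < 0) →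
      IntegrableOn (fun u : ℝ => (g u : ℂ) * u / (μ - u)) (Ioi 0) ∧
      PhiInf V μ + (c : ℂ)⁻¹ = ∫ u in Ioi (0 : ℝ), (g u : ℂ) * u / (μ - u) := by
  have hVcont : ContinuousOn V (Ici 0) := fun y hy => (hV y hy).continuousWithinAt
  have hV'cont : ContinuousOn V' (Ici 0) := fun y hy => (hV' y hy).continuousWithinAt
  have hne : ∀ y ∈ Ici 0, V' y ≠ 0 := fun y hy => (hpos y hy).ne'
  have hpos' : ∀ y ∈ Ioi 0, 0 < V' y := fun y hy => hpos y (Ioi_subset_Ici_self hy)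
  obtain ⟨m, hm, hmV'⟩ := exists_gt_forall_le_of_tendsto_atTop hV'cont hpos hlim hc
  have hmV : ∀ y ∈ Ici 0, m * y ≤ V y := by
    simpa only [hV0, sub_zero] using mul_sub_le_sub_of_le_hasDerivWithinAt_Ici hV
      fun y hy => hmV' y (Ioi_subset_Ici_self hy)
  have hVnonneg : ∀ y ∈ Ici 0, 0 ≤ V y := fun y hy => (mul_nonneg hm.le hy).trans (hmV y hy)
  have hVtop : Tendsto V atTop atTop :=
    tendsto_atTop_mono' atTop ((eventually_ge_atTop 0).mono hmV) (tendsto_id.const_mul_atTop hm)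
  have hint : IntegrableOn (fun y => V'' y / V' y ^ 2) (Ioi 0) :=
    integrableOn_div_of_le measurableSet_Ioi hV''int ((hV'cont.mono Ioi_subset_Ici_self).pow 2)
      (pow_pos hm 2) fun y hy => pow_le_pow_left₀ hm.le (hmV' y (Ioi_subset_Ici_self hy)) 2
  refine ⟨hint, ?_, fun μ hμ => ?_⟩
  · rw [integral_Ioi_div_sq hV' hne hint hc.ne' hlim]
    ring
  have hintμ : IntegrableOn (fun y => (V'' y / V' y ^ 2) • ((V y : ℂ) / (μ - V y))) (Ioi 0) :=
    integrableOn_smul_div_sub hμ measurableSet_Ioi (hVcont.mono Ioi_subset_Ici_self)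
      (fun y hy => hVnonneg y (Ioi_subset_Ici_self hy)) hint
  have hsubst := deriv_smul_weight_comp_eqOn (μ := μ) (fun y hy => (hpos' y hy).ne') hg
  constructor
  · rwa [← hV0, integrableOn_Ioi_iff_deriv_smul_comp hV hpos' hVtop,
      integrableOn_congr_fun hsubst measurableSet_Ioi]
  · have hchange := integral_Ioi_eq_integral_deriv_smul_comp hV hpos' hVtop
      fun u => (g u : ℂ) * u / (μ - u)
    rw [hV0] at hchange
    rw [hchange, setIntegral_congr_fun measurableSet_Ioi hsubst]
    exact PhiInf_add_inv_eq_integral_smul_div_sub hV hV' hV0 hne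
      (fun y hy => sub_ofReal_ne_zero hμ (hVnonneg y hy)) hVtop hc.ne' hlim
      (integrableOn_inv_sub_sq_of_mul_le hμ hVcont hm hmV) hintμ

end ShearProfile

/-- `Φ_∞(μ) + 1 = ∫₀^∞ g(u) u/(μ-u) du`, absolutely convergent; this uses the
identity `-1/V_s'(0) + ∫₀^∞ V_s''/(V_s')² = -1`. -/
theorem PhiInf_add_one_eq
    (Vs : ℝ → ℝ) (As : ℝ)
    (hVs_smooth : ContDiff ℝ (⊤ : ℕ∞) Vs)
    (hVs0 : Vs 0 = 0)
    (hVs'pos : ∀ z : ℝ, 0 ≤ z → 0 < deriv Vs z)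
    (hdecay : ∀ p : ℕ, Tendsto (fun z : ℝ => z ^ p * (Vs z - z - As)) atTop (nhds 0))
    (hderiv_decay : ∀ n : ℕ, 1 ≤ n → ∀ p : ℕ,
      Tendsto (fun z : ℝ => z ^ p * iteratedDeriv n (fun w => Vs w - w) z) atTop (nhds 0))
    (g : ℝ → ℝ)
    (hg : ∀ z : ℝ, 0 ≤ z → g (Vs z) = deriv (deriv Vs) z / (deriv Vs z) ^ 3)
    :
    MeasureTheory.IntegrableOn
        (fun y : ℝ => deriv (deriv Vs) y / (deriv Vs y) ^ 2) (Set.Ioi 0) ∧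
    (-1 / deriv Vs 0 + ∫ y in Set.Ioi (0 : ℝ), deriv (deriv Vs) y / (deriv Vs y) ^ 2 = -1) ∧
    ∀ μ : ℂ, (μ.im ≠ 0 ∨ μ.re < 0) →
      MeasureTheory.IntegrableOn (fun u : ℝ => (g u : ℂ) * u / (μ - u)) (Set.Ioi 0) ∧
      PhiInf Vs μ + 1 = ∫ u in Set.Ioi (0 : ℝ), (g u : ℂ) * u / (μ - u) := by
  have hdiff : Differentiable ℝ Vs := hVs_smooth.differentiable (by simp)
  have hderiv_smooth : ContDiff ℝ (⊤ : ℕ∞) (deriv Vs) := (contDiff_infty_iff_deriv.1 hVs_smooth).2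
  have hderiv_diff : Differentiable ℝ (deriv Vs) := hderiv_smooth.differentiable (by simp)
  have hlim : Tendsto (deriv Vs) atTop (nhds 1) := by
    simpa [iteratedDeriv_one_sub_id hdiff] using (hderiv_decay 1 le_rfl 0).add_const 1
  have hlim_sq : Tendsto (fun z => z ^ (2 : ℝ) • deriv (deriv Vs) z) atTop (nhds 0) := by
    simpa [iteratedDeriv_two_sub_id hdiff] using hderiv_decay 2 one_le_two 2
  have hint : IntegrableOn (deriv (deriv Vs)) (Set.Ioi 0) :=
    integrableOn_Ioi_of_tendsto_rpow_smul one_lt_two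
      (contDiff_infty_iff_deriv.1 hderiv_smooth).2.continuous.continuousOn hlim_sq
  simpa using PhiInf_add_one_eq_general (fun z _ => (hdiff z).hasDerivAt.hasDerivWithinAt)
    (fun z _ => (hderiv_diff z).hasDerivAt.hasDerivWithinAt) hVs0 hVs'pos one_pos hlim hint
    fun z hz => hg z (le_of_lt hz)
end

section
/- Fix μ ∈ ℂ ∖ [0,∞). (a) If φ : [0,∞) → ℂ is continuously differentiable, satisfies (μ − V_s(z)) φ'(z) + V_s'(z) φ(z) = −1 for all z ≥ 0 and φ'(z) → 0 as z → ∞, then φ(z) = (μ − V_s(z)) ∫_z^∞ (μ − V_s(y))^{−2} dy for all z ≥ 0 (uniqueness of the solution with Neumann decay at infinity). (b) Consequently, the infinite-frequency eigenvalue problem — find a continuously differentiable φ with (μ − V_s) φ' + V_s' φ = −1 on [0,∞), φ(0) = 0, and φ'(z) → 0 as z → ∞ — has a solution if and only if Φ_∞(μ) = 0. -/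
open MeasureTheory Filter

/-- The explicit solution `φ_{μ,∞}(z) = (μ - V_s(z)) ∫_z^∞ (μ - V_s(y))⁻² dy`. -/
noncomputable def phiSol (Vs : ℝ → ℝ) (μ : ℂ) (z : ℝ) : ℂ :=
  (μ - (Vs z : ℂ)) * ∫ y in Set.Ioi z, ((μ - (Vs y : ℂ)) ^ 2)⁻¹

/-!
Write `w = μ - V_s`, so that the equation reads `w φ' - w' φ = -1`, that is, `(φ / w)' = -1 / w²`.
The slope of `w` has a nonzero limit at infinity, so `w` grows linearly and `1 / w²` is integrable.
The equation together with `φ' → 0` forces `φ / w → 0`, and integrating `(φ / w)'` from `z` to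
infinity determines `φ`. Conversely, the resulting function solves the equation, and it vanishes
at `0` exactly when the integral of `1 / w²` over `(0, ∞)` does.
-/

section GrowthAndTails

open Set Asymptotics Topology

variable {E : Type*} [NormedAddCommGroup E] [NormedSpace ℝ E] {f f' : ℝ → E}

theorem isLittleO_id_of_tendsto_deriv_zero (hf : ∀ᶠ x in atTop, HasDerivAt f (f' x) x)
    (hf' : Tendsto f' atTop (𝓝 0)) : f =o[atTop] (id : ℝ → ℝ) := by
  refine isLittleO_iff.2 fun ε hε => ?_
  have hsmall : ∀ᶠ x in atTop, ‖f' x‖ ≤ ε / 2 :=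
    (tendsto_zero_iff_norm_tendsto_zero.1 hf').eventually_le_const (half_pos hε)
  obtain ⟨A, hA⟩ := eventually_atTop.1 ((hf.and hsmall).and (eventually_ge_atTop 0))
  have hA0 : 0 ≤ A := (hA A le_rfl).2
  filter_upwards [eventually_ge_atTop A,
    (isLittleO_const_id_atTop (f A)).bound (half_pos hε)] with x hAx hfA
  have hmean : ‖f x - f A‖ ≤ ε / 2 * ‖x - A‖ :=
    (convex_Ici A).norm_image_sub_le_of_norm_hasDerivWithin_le
      (fun y hy => (hA y hy).1.1.hasDerivWithinAt) (fun y hy => (hA y hy).1.2) self_mem_Ici hAx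
  have hdist : ‖x - A‖ ≤ ‖x‖ := by
    rw [Real.norm_of_nonneg (sub_nonneg.2 hAx), Real.norm_of_nonneg (hA0.trans hAx)]
    exact sub_le_self x hA0
  calc ‖f x‖ ≤ ‖f A‖ + ‖f x - f A‖ := norm_le_norm_add_norm_sub' (f x) (f A)
    _ ≤ ε / 2 * ‖x‖ + ε / 2 * ‖x‖ := by gcongr; exacts [hfA, hmean.trans (by gcongr)]
    _ = ε * ‖x‖ := by ring

theorem isTheta_id_of_tendsto_deriv {c : E} (hf : ∀ᶠ x in atTop, HasDerivAt f (f' x) x)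
    (hf' : Tendsto f' atTop (𝓝 c)) (hc : c ≠ 0) : f =Θ[atTop] (id : ℝ → ℝ) := by
  have hremainder : (fun x => f x - x • c) =o[atTop] (id : ℝ → ℝ) := by
    refine isLittleO_id_of_tendsto_deriv_zero (f' := fun x => f' x - c) ?_
      (by simpa only [sub_self] using hf'.sub_const c)
    filter_upwards [hf] with x hx
    simpa only [id, one_smul] using hx.fun_sub ((hasDerivAt_id x).smul_const c)
  have hlinear : (fun x : ℝ => x • c) =Θ[atTop] (id : ℝ → ℝ) := by
    have hnorm : (fun x : ℝ => ‖c‖ * ‖x‖) =Θ[atTop] (id : ℝ → ℝ) :=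
      (isTheta_const_mul_left (norm_ne_zero_iff.2 hc)).2 (isTheta_norm_left.2 (isTheta_refl _ _))
    refine isTheta_norm_left.1 ?_
    simpa only [norm_smul, mul_comm] using hnorm
  simpa only [Pi.add_def, sub_add_cancel] using hremainder.add_isTheta hlinear

theorem id_isBigO_of_hasDerivWithinAt_Ici {a : ℝ} {c : E}
    (hf : ∀ x, a ≤ x → HasDerivWithinAt f (f' x) (Ici a) x) (hf' : Tendsto f' atTop (𝓝 c))
    (hc : c ≠ 0) : (id : ℝ → ℝ) =O[atTop] f := by
  refine (isTheta_id_of_tendsto_deriv ?_ hf' hc).isBigO_symm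
  filter_upwards [eventually_gt_atTop a] with x hx
  exact (hf x hx.le).hasDerivAt (Ici_mem_nhds hx)

theorem hasDerivWithinAt_integral_Ioi [CompleteSpace E] {a z : ℝ} (hfc : ContinuousOn f (Ici a))
    (hfi : IntegrableOn f (Ioi a)) (hz : a ≤ z) :
    HasDerivWithinAt (fun x => ∫ y in Ioi x, f y) (-f z) (Ici a) z := by
  have hsplit : ∀ x ∈ Ici a,
      ∫ y in Ioi x, f y = (∫ y in Ioi a, f y) - ∫ y in a..x, f y := fun x hx => by
    rw [← intervalIntegral.integral_Ioi_sub_Ioi hfi hx, sub_sub_cancel]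
  refine HasDerivWithinAt.congr ?_ hsplit (hsplit z hz)
  have hint : IntervalIntegrable f volume a z :=
    (intervalIntegrable_iff_integrableOn_Ioc_of_le hz).2 (hfi.mono_set Ioc_subset_Ioi_self)
  have hfc' : ContinuousOn f (Ioi a) := hfc.mono Ioi_subset_Ici_self
  rcases hz.eq_or_lt with rfl | hlt
  · exact (intervalIntegral.integral_hasDerivWithinAt_right hint
      (hfc'.stronglyMeasurableAtFilter_nhdsWithin measurableSet_Ioi a)
      ((hfc a hz).mono Ioi_subset_Ici_self)).const_sub _
  · exact ((intervalIntegral.integral_hasDerivAt_right hint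
      (hfc'.stronglyMeasurableAtFilter isOpen_Ioi z hlt)
      (hfc.continuousAt (Ici_mem_nhds hlt))).const_sub _).hasDerivWithinAt

variable {𝕜 : Type*} [NormedField 𝕜] {w : ℝ → 𝕜}

theorem inv_isBigO_inv_of_id_isBigO (hw : (id : ℝ → ℝ) =O[atTop] w) :
    (fun x => (w x)⁻¹) =O[atTop] fun x : ℝ => x⁻¹ :=
  hw.inv_rev ((eventually_ne_atTop 0).mono fun _ hx hx0 => (hx hx0).elim)

theorem tendsto_inv_of_id_isBigO (hw : (id : ℝ → ℝ) =O[atTop] w) :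
    Tendsto (fun x => (w x)⁻¹) atTop (𝓝 0) :=
  (inv_isBigO_inv_of_id_isBigO hw).trans_tendsto tendsto_inv_atTop_zero

theorem integrableOn_inv_sq_of_id_isBigO {a : ℝ} (hwc : ContinuousOn w (Ici a))
    (hw0 : ∀ x, a ≤ x → w x ≠ 0) (hw : (id : ℝ → ℝ) =O[atTop] w) :
    IntegrableOn (fun x => (w x ^ 2)⁻¹) (Ioi a) := by
  have hcont : ContinuousOn (fun x => (w x ^ 2)⁻¹) (Ici a) :=
    (hwc.pow 2).inv₀ fun x hx => pow_ne_zero 2 (hw0 x hx)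
  have hdecay : (fun x => (w x ^ 2)⁻¹) =O[atTop] fun x : ℝ => x ^ (-2 : ℝ) := by
    refine ((inv_isBigO_inv_of_id_isBigO hw).pow 2).congr (fun x => inv_pow (w x) 2) fun x => ?_
    norm_cast
    exact inv_pow x 2
  exact ((hcont.locallyIntegrableOn measurableSet_Ici).integrableOn_of_isBigO_atTop hdecay
    (integrableAtFilter_rpow_atTop_iff.2 (by norm_num))).mono_set Ioi_subset_Ici_self

end GrowthAndTails

section NeumannProblem

open Set Topology

variable {𝕜 : Type*} [RCLike 𝕜]

/-- The function `φ`, with derivative `φ'`, solves `w φ' - w' φ = -1` on `[a, ∞)` and satisfies the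
Neumann condition `φ' → 0` at infinity. The infinite-frequency equation is the case `w = μ - V_s`,
`w' = -V_s'`. The derivative is carried as data, so that it is one-sided at the endpoint `a`. -/
structure IsNeumannSolution (w w' : ℝ → 𝕜) (a : ℝ) (φ φ' : ℝ → 𝕜) : Prop where
  hasDerivWithinAt : ∀ z, a ≤ z → HasDerivWithinAt φ (φ' z) (Ici a) z
  equation : ∀ z, a ≤ z → w z * φ' z - w' z * φ z = -1
  tendsto_deriv : Tendsto φ' atTop (𝓝 0)

variable {w w' φ φ' : ℝ → 𝕜} {a z : ℝ} {c : 𝕜}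

namespace IsNeumannSolution

theorem continuousOn_deriv (h : IsNeumannSolution w w' a φ φ') (hwc : ContinuousOn w (Ici a))
    (hw'c : ContinuousOn w' (Ici a)) (hw0 : ∀ z, a ≤ z → w z ≠ 0) : ContinuousOn φ' (Ici a) := by
  have hφc : ContinuousOn φ (Ici a) := fun z hz => (h.hasDerivWithinAt z hz).continuousWithinAt
  have hφ' : EqOn φ' (fun z => (w' z * φ z - 1) / w z) (Ici a) := fun z hz =>
    (eq_div_iff (hw0 z hz)).2 (by linear_combination h.equation z hz)
  exact (((hw'c.mul hφc).sub continuousOn_const).div hwc hw0).congr hφ'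

theorem hasDerivWithinAt_div (h : IsNeumannSolution w w' a φ φ') (hz : a ≤ z)
    (hw : HasDerivWithinAt w (w' z) (Ici a) z) (hw0 : w z ≠ 0) :
    HasDerivWithinAt (fun x => φ x / w x) (-(w z ^ 2)⁻¹) (Ici a) z := by
  have hnum : φ' z * w z - φ z * w' z = -1 := by linear_combination h.equation z hz
  simpa only [hnum, neg_div, one_div] using (h.hasDerivWithinAt z hz).fun_div hw hw0

theorem tendsto_div (h : IsNeumannSolution w w' a φ φ') (hw0 : ∀ z, a ≤ z → w z ≠ 0)
    (hinv : Tendsto (fun z => (w z)⁻¹) atTop (𝓝 0)) (hlim : Tendsto w' atTop (𝓝 c))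
    (hc : c ≠ 0) : Tendsto (fun z => φ z / w z) atTop (𝓝 0) := by
  -- The equation, divided by `w w'`, reads `φ / w = (φ' + 1 / w) / w'`.
  have hquot : Tendsto (fun z => (φ' z + (w z)⁻¹) / w' z) atTop (𝓝 0) := by
    simpa only [add_zero, zero_div, Pi.div_def] using (h.tendsto_deriv.add hinv).div hlim hc
  refine hquot.congr' ?_
  filter_upwards [eventually_ge_atTop a, hlim.eventually_ne hc] with z hz hw'z
  have hwz := hw0 z hz
  field_simp
  linear_combination h.equation z hz

theorem eq_mul_integral (h : IsNeumannSolution w w' a φ φ')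
    (hw : ∀ z, a ≤ z → HasDerivWithinAt w (w' z) (Ici a) z) (hw0 : ∀ z, a ≤ z → w z ≠ 0)
    (hlim : Tendsto w' atTop (𝓝 c)) (hc : c ≠ 0) (hz : a ≤ z) :
    φ z = w z * ∫ y in Ioi z, (w y ^ 2)⁻¹ := by
  have hgrowth := id_isBigO_of_hasDerivWithinAt_Ici hw hlim hc
  have hint : IntegrableOn (fun y => (w y ^ 2)⁻¹) (Ioi z) :=
    (integrableOn_inv_sq_of_id_isBigO (fun x hx => (hw x hx).continuousWithinAt) hw0
      hgrowth).mono_set (Ioi_subset_Ioi hz)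
  have hderiv (x : ℝ) (hx : a ≤ x) := h.hasDerivWithinAt_div hx (hw x hx) (hw0 x hx)
  have hFTC : ∫ y in Ioi z, -(w y ^ 2)⁻¹ = 0 - φ z / w z :=
    integral_Ioi_of_hasDerivAt_of_tendsto
      ((hderiv z hz).continuousWithinAt.mono (Ici_subset_Ici.2 hz))
      (fun x hx => (hderiv x (hz.trans hx.le)).hasDerivAt (Ici_mem_nhds (hz.trans_lt hx)))
      hint.neg (h.tendsto_div hw0 (tendsto_inv_of_id_isBigO hgrowth) hlim hc)
  rw [integral_neg, zero_sub, neg_inj] at hFTC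
  rw [hFTC, mul_div_cancel₀ _ (hw0 z hz)]

end IsNeumannSolution

theorem isNeumannSolution_mul_integral
    (hw : ∀ z, a ≤ z → HasDerivWithinAt w (w' z) (Ici a) z) (hw0 : ∀ z, a ≤ z → w z ≠ 0)
    (hlim : Tendsto w' atTop (𝓝 c)) (hc : c ≠ 0) :
    IsNeumannSolution w w' a (fun z => w z * ∫ y in Ioi z, (w y ^ 2)⁻¹)
      (fun z => w' z * (∫ y in Ioi z, (w y ^ 2)⁻¹) - (w z)⁻¹) := by
  have hgrowth := id_isBigO_of_hasDerivWithinAt_Ici hw hlim hc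
  have hwc : ContinuousOn w (Ici a) := fun z hz => (hw z hz).continuousWithinAt
  have hint := integrableOn_inv_sq_of_id_isBigO hwc hw0 hgrowth
  refine ⟨fun z hz => ?_, fun z hz => ?_, ?_⟩
  · have htail := hasDerivWithinAt_integral_Ioi
      ((hwc.pow 2).inv₀ fun x hx => pow_ne_zero 2 (hw0 x hx)) hint hz
    refine ((hw z hz).fun_mul htail).congr_deriv ?_
    have hwz := hw0 z hz
    simp only [Pi.inv_apply, Pi.pow_apply]
    field_simp
    ring
  · have hwz := hw0 z hz
    field_simp
    ring
  · simpa only [id, mul_zero, sub_zero] using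
      (hlim.mul (tendsto_integral_Ioi_zero tendsto_id)).sub (tendsto_inv_of_id_isBigO hgrowth)

end NeumannProblem

section ShearProfile

open Set Topology

theorem PhiInf_eq_zero_iff_phiSol_zero {Vs : ℝ → ℝ} {μ : ℂ} (hμ0 : μ ≠ 0) (hμ : μ ≠ Vs 0) :
    PhiInf Vs μ = 0 ↔ phiSol Vs μ 0 = 0 := by
  simp only [PhiInf, phiSol, mul_eq_zero, hμ0, sub_ne_zero.2 hμ, false_or]

theorem phiSol_unique_and_eigen_iff_general {Vs Vs' : ℝ → ℝ} {c : ℝ} {μ : ℂ}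
    (hVs : ∀ z, 0 ≤ z → HasDerivWithinAt Vs (Vs' z) (Ici 0) z)
    (hVs' : ContinuousOn Vs' (Ici 0)) (hlim : Tendsto Vs' atTop (𝓝 c)) (hc : c ≠ 0)
    (hμ0 : μ ≠ 0) (hμ : ∀ z, 0 ≤ z → μ ≠ Vs z) :
    (∀ φ φd : ℝ → ℂ,
      (∀ z : ℝ, 0 ≤ z → HasDerivWithinAt φ (φd z) (Ici 0) z) →
      (∀ z : ℝ, 0 ≤ z → (μ - Vs z) * φd z + Vs' z * φ z = -1) →
      Tendsto φd atTop (𝓝 0) →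
      ∀ z : ℝ, 0 ≤ z → φ z = phiSol Vs μ z) ∧
    ((∃ φ φd : ℝ → ℂ,
      (∀ z : ℝ, 0 ≤ z → HasDerivWithinAt φ (φd z) (Ici 0) z) ∧
      ContinuousOn φd (Ici 0) ∧
      (∀ z : ℝ, 0 ≤ z → (μ - Vs z) * φd z + Vs' z * φ z = -1) ∧
      φ 0 = 0 ∧ Tendsto φd atTop (𝓝 0)) ↔ PhiInf Vs μ = 0) := by
  have hw (z : ℝ) (hz : 0 ≤ z) :
      HasDerivWithinAt (fun x => μ - Vs x) (-Vs' z : ℂ) (Ici 0) z :=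
    (hVs z hz).ofReal_comp.const_sub μ
  have hw0 (z : ℝ) (hz : 0 ≤ z) : μ - Vs z ≠ 0 := sub_ne_zero.2 (hμ z hz)
  have hwlim : Tendsto (fun z => (-Vs' z : ℂ)) atTop (𝓝 (-c)) := hlim.ofReal.neg
  have hc' : (-c : ℂ) ≠ 0 := neg_ne_zero.2 (Complex.ofReal_ne_zero.2 hc)
  have huniq (φ φd : ℝ → ℂ) (hφ : ∀ z : ℝ, 0 ≤ z → HasDerivWithinAt φ (φd z) (Ici 0) z)
      (hode : ∀ z : ℝ, 0 ≤ z → (μ - Vs z) * φd z + Vs' z * φ z = -1)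
      (hφd : Tendsto φd atTop (𝓝 0)) (z : ℝ) (hz : 0 ≤ z) : φ z = phiSol Vs μ z :=
    IsNeumannSolution.eq_mul_integral
      ⟨hφ, by simpa only [neg_mul, sub_neg_eq_add] using hode, hφd⟩ hw hw0 hwlim hc' hz
  refine ⟨huniq, ?_⟩
  rw [PhiInf_eq_zero_iff_phiSol_zero hμ0 (hμ 0 le_rfl)]
  constructor
  · rintro ⟨φ, φd, hφ, -, hode, hφ0, hφd⟩
    rw [← huniq φ φd hφ hode hφd 0 le_rfl, hφ0]
  · intro hzero
    have hsol := isNeumannSolution_mul_integral hw hw0 hwlim hc'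
    refine ⟨_, _, hsol.hasDerivWithinAt, hsol.continuousOn_deriv
      (fun z hz => (hw z hz).continuousWithinAt) (by fun_prop) hw0, ?_, hzero, hsol.tendsto_deriv⟩
    simpa only [neg_mul, sub_neg_eq_add] using hsol.equation

theorem ne_ofReal_of_im_ne_zero_or_re_neg {μ : ℂ} (hμ : μ.im ≠ 0 ∨ μ.re < 0) {x : ℝ}
    (hx : 0 ≤ x) : μ ≠ x := by
  rintro rfl
  simp only [Complex.ofReal_im, ne_eq, not_true_eq_false, Complex.ofReal_re, false_or] at hμ
  exact hμ.not_ge hx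

theorem tendsto_deriv_of_tendsto_deriv_sub_id {V : ℝ → ℝ} {c : ℝ} (hV : Differentiable ℝ V)
    (h : Tendsto (deriv fun z => V z - z) atTop (𝓝 (c - 1))) : Tendsto (deriv V) atTop (𝓝 c) := by
  have hderiv (z : ℝ) : deriv (fun x => V x - x) z + 1 = deriv V z := by
    rw [deriv_fun_sub (hV z) differentiableAt_fun_id, deriv_id'', sub_add_cancel]
  simpa only [hderiv, sub_add_cancel] using h.add_const 1

end ShearProfile

/-- (a) any C¹ solution of `(μ-V_s)φ' + V_s'φ = -1` on `[0,∞)` with `φ' → 0`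
at infinity equals `φ_{μ,∞}`; (b) the infinite-frequency eigenvalue problem (additionally
`φ(0) = 0`) is solvable iff `Φ_∞(μ) = 0`. -/
theorem phiSol_unique_and_eigen_iff
    (Vs : ℝ → ℝ) (As : ℝ)
    (hVs_smooth : ContDiff ℝ (⊤ : ℕ∞) Vs)
    (hVs0 : Vs 0 = 0)
    (hVs'pos : ∀ z : ℝ, 0 ≤ z → 0 < deriv Vs z)
    (hdecay : ∀ p : ℕ, Tendsto (fun z : ℝ => z ^ p * (Vs z - z - As)) atTop (nhds 0))
    (hderiv_decay : ∀ n : ℕ, 1 ≤ n → ∀ p : ℕ,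
      Tendsto (fun z : ℝ => z ^ p * iteratedDeriv n (fun w => Vs w - w) z) atTop (nhds 0))
    (μ : ℂ) (hμ : μ.im ≠ 0 ∨ μ.re < 0) :
    (∀ φ φd : ℝ → ℂ,
      (∀ z : ℝ, 0 ≤ z → HasDerivWithinAt φ (φd z) (Set.Ici 0) z) →
      ContinuousOn φd (Set.Ici 0) →
      (∀ z : ℝ, 0 ≤ z → (μ - (Vs z : ℂ)) * φd z + ((deriv Vs z : ℝ) : ℂ) * φ z = -1) →
      Tendsto φd atTop (nhds 0) →
      ∀ z : ℝ, 0 ≤ z → φ z = phiSol Vs μ z) ∧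
    ((∃ φ φd : ℝ → ℂ,
      (∀ z : ℝ, 0 ≤ z → HasDerivWithinAt φ (φd z) (Set.Ici 0) z) ∧
      ContinuousOn φd (Set.Ici 0) ∧
      (∀ z : ℝ, 0 ≤ z → (μ - (Vs z : ℂ)) * φd z + ((deriv Vs z : ℝ) : ℂ) * φ z = -1) ∧
      φ 0 = 0 ∧ Tendsto φd atTop (nhds 0)) ↔ PhiInf Vs μ = 0) := by
  have hdiff : Differentiable ℝ Vs := hVs_smooth.differentiable (by simp)
  have hlim : Tendsto (deriv Vs) atTop (nhds 1) :=
    tendsto_deriv_of_tendsto_deriv_sub_id hdiff <| by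
      simpa only [pow_zero, one_mul, iteratedDeriv_one, sub_self] using hderiv_decay 1 le_rfl 0
  have hmono : StrictMonoOn Vs (Set.Ici 0) :=
    strictMonoOn_of_deriv_pos (convex_Ici 0) hdiff.continuous.continuousOn
      fun z hz => hVs'pos z (interior_subset hz)
  have hne (z : ℝ) (hz : 0 ≤ z) : μ ≠ Vs z :=
    ne_ofReal_of_im_ne_zero_or_re_neg hμ (hVs0 ▸ hmono.monotoneOn Set.self_mem_Ici hz hz)
  obtain ⟨huniq, heigen⟩ := phiSol_unique_and_eigen_iff_general
    (fun z _ => (hdiff z).hasDerivAt.hasDerivWithinAt)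
    (hVs_smooth.continuous_deriv (by simp)).continuousOn hlim one_ne_zero
    (by simpa using ne_ofReal_of_im_ne_zero_or_re_neg hμ le_rfl) hne
  exact ⟨fun φ φd hφ _ => huniq φ φd hφ, heigen⟩
end

section
/- For any 0 < ρ₀ < R, as b → 0⁺ the functions a ↦ Φ_∞(a + ib) converge uniformly on the interval [ρ₀, R] to the function a ↦ −1/V_s'(0) + a · PV∫₀^∞ g(u)/(a−u) du − iπ a g(a). (In particular the principal value exists for every a > 0.) -/
open MeasureTheory Filter

/-- `HasPV g a L` : the principal value `PV ∫₀^∞ g(u)/(a-u) du` exists and equals `L`. -/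
def HasPV (g : ℝ → ℝ) (a L : ℝ) : Prop :=
  Filter.Tendsto (fun ε : ℝ => ∫ u in {u : ℝ | 0 < u ∧ ε < |u - a|}, g u / (a - u))
    (nhdsWithin 0 (Set.Ioi 0)) (nhds L)

/-!
Write `μ = a + ib`. Integrating `(μ - V)⁻² = (1 / V') ∂(μ - V)⁻¹` by parts and substituting
`u = V(y)` gives `Φ_∞(μ) = -1 / V'(0) + μ ∫₀^∞ g(u) / (μ - u) du`, so everything rests on the
boundary values of the Cauchy transform of `g`, extended by zero to `G` on the line.

In the variable `t = a - u` the kernel is `1 / (t + ib)`. On a window `|t| ≤ δ` split off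
`G(a) / (t + ib)`, whose integral is `G(a) (log(δ + ib) - log(-δ + ib)) → -iπ G(a)`. What is left
converges to the integral of `(G(a - t) - G(a) 1_{|t| ≤ δ}) / t`, which is the principal value
because the odd function `1 / t` does not contribute outside `|t| ≤ ε`. The error is the integral
of this quotient against `ib / (t + ib)`; as `G` is Lipschitz on compact subsets of `(0, ∞)`, the
quotient has a majorant independent of `a` in a compact set, and the convergence is uniform.
-/

open Set Topology

theorem tendstoUniformlyOn_of_dist_le {ι α β : Type*} [PseudoMetricSpace β] {F : ι → α → β}
    {f : α → β} {E : ι → ℝ} {l : Filter ι} {s : Set α} (hE : Tendsto E l (𝓝 0))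
    (h : ∀ᶠ n in l, ∀ x ∈ s, dist (f x) (F n x) ≤ E n) : TendstoUniformlyOn F f l s := by
  refine Metric.tendstoUniformlyOn_iff.mpr fun ε hε => ?_
  filter_upwards [h, hE.eventually_lt_const hε] with n hn hnε x hx
  exact (hn x hx).trans_lt hnε

section SokhotskiPlemelj

open Complex

/-- The Cauchy transform `μ ↦ ∫ G(u)/(μ - u) du` of a function on the line. -/
noncomputable def cauchyTransform (G : ℝ → ℝ) (μ : ℂ) : ℂ :=
  ∫ u : ℝ, (G u : ℂ) / (μ - u)

/-- The integrand of `PV ∫ G(u)/(a - u) du` in the variable `t = a - u`, with the singularity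
removed: the odd function `G(a)/t` is subtracted on the window `|t| ≤ δ`. -/
noncomputable def pvIntegrand (G : ℝ → ℝ) (δ a t : ℝ) : ℝ :=
  (G (a - t) - (Icc (-δ) δ).indicator (fun _ => G a) t) / t

/-- `ω` dominates the difference quotients of `G` at `a` with steps `|t| ≤ δ`. When `ω` is
integrable this is the Dini condition at `a`. -/
def DominatesQuotients (ω G : ℝ → ℝ) (δ a : ℝ) : Prop :=
  ∀ t ∈ Icc (-δ) δ, |(G (a - t) - G a) / t| ≤ ω t

variable {G ω : ℝ → ℝ} {δ a b : ℝ}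

theorem ofReal_add_mul_I_ne_zero (t : ℝ) (hb : b ≠ 0) : (t : ℂ) + b * I ≠ 0 := fun h =>
  hb (by simpa using congrArg im h)

theorem abs_pvIntegrand_le_of_mem (hω : DominatesQuotients ω G δ a) {t : ℝ}
    (ht : t ∈ Icc (-δ) δ) : |pvIntegrand G δ a t| ≤ ω t := by
  simpa only [pvIntegrand, indicator_of_mem ht] using hω t ht

theorem abs_pvIntegrand_le_of_notMem (hδ : 0 < δ) {t : ℝ} (ht : t ∉ Icc (-δ) δ) :
    |pvIntegrand G δ a t| ≤ δ⁻¹ * |G (a - t)| := by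
  have hδt : δ ≤ |t| := (not_le.mp fun h => ht (abs_le.mp h)).le
  rw [pvIntegrand, indicator_of_notMem ht, sub_zero, abs_div, div_eq_inv_mul]
  gcongr

theorem abs_pvIntegrand_le (hδ : 0 < δ) (hω : DominatesQuotients ω G δ a) (t : ℝ) :
    |pvIntegrand G δ a t| ≤ (Icc (-δ) δ).indicator ω t + δ⁻¹ * |G (a - t)| := by
  by_cases ht : t ∈ Icc (-δ) δ
  · rw [indicator_of_mem ht]
    exact (abs_pvIntegrand_le_of_mem hω ht).trans (le_add_of_nonneg_right (by positivity))
  · rw [indicator_of_notMem ht, zero_add]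
    exact abs_pvIntegrand_le_of_notMem hδ ht

section Integrable

variable (hδ : 0 < δ) (hG : Integrable G) (hωint : IntegrableOn ω (Icc (-δ) δ))
include hG

theorem integrable_mul_abs_comp_sub_left (k a : ℝ) : Integrable fun t => k * |G (a - t)| :=
  (hG.comp_sub_left a).abs.const_mul k

theorem aestronglyMeasurable_pvIntegrand (δ a : ℝ) :
    AEStronglyMeasurable (pvIntegrand G δ a) volume :=
  ((hG.comp_sub_left a).aestronglyMeasurable.sub
    (aestronglyMeasurable_const.indicator measurableSet_Icc)).div₀
      measurable_id.aestronglyMeasurable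

include hδ hωint

theorem integrable_pvIntegrand (hω : DominatesQuotients ω G δ a) :
    Integrable (pvIntegrand G δ a) :=
  ((hωint.integrable_indicator measurableSet_Icc).add
    (integrable_mul_abs_comp_sub_left hG δ⁻¹ a)).mono' (aestronglyMeasurable_pvIntegrand hG δ a)
      (.of_forall (abs_pvIntegrand_le hδ hω))

theorem abs_integral_pvIntegrand_le (hω : DominatesQuotients ω G δ a) :
    |∫ t, pvIntegrand G δ a t| ≤ (∫ t in Icc (-δ) δ, ω t) + δ⁻¹ * ∫ u, |G u| := by
  have hωi := hωint.integrable_indicator measurableSet_Icc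
  have hGi := integrable_mul_abs_comp_sub_left hG δ⁻¹ a
  have hbound : Integrable fun t => (Icc (-δ) δ).indicator ω t + δ⁻¹ * |G (a - t)| := hωi.add hGi
  calc |∫ t, pvIntegrand G δ a t|
      ≤ ∫ t, ((Icc (-δ) δ).indicator ω t + δ⁻¹ * |G (a - t)|) :=
        norm_integral_le_of_norm_le (f := pvIntegrand G δ a) hbound
          (.of_forall (abs_pvIntegrand_le hδ hω))
    _ = _ := by
        rw [integral_add hωi hGi, integral_indicator measurableSet_Icc, integral_const_mul,
          integral_sub_left_eq_self (fun u => |G u|) volume a]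

end Integrable

/-! ### Principal values -/

theorem setIntegral_eq_zero_of_odd {f : ℝ → ℝ} {s : Set ℝ} (hs : ∀ t, -t ∈ s ↔ t ∈ s)
    (hsm : MeasurableSet s) (hf : ∀ t, f (-t) = -f t) : ∫ t in s, f t = 0 := by
  have hodd : ∀ t, s.indicator f (-t) = -s.indicator f t := fun t => by
    by_cases ht : t ∈ s <;> simp [hs, ht, hf]
  have h : ∫ t, s.indicator f t = -∫ t, s.indicator f t :=
    calc ∫ t, s.indicator f t = ∫ t, s.indicator f (-t) := (integral_neg_eq_self _ volume).symm
      _ = -∫ t, s.indicator f t := by simp_rw [hodd, integral_neg]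
  rw [← integral_indicator hsm]
  linarith

theorem aecover_lt_abs : AECover volume (𝓝[>] (0 : ℝ)) fun ε => {t : ℝ | ε < |t|} where
  ae_eventually_mem := by
    filter_upwards [Measure.ae_ne volume (0 : ℝ)] with t ht
    exact nhdsWithin_le_nhds (eventually_lt_nhds (abs_pos.mpr ht))
  measurableSet ε := measurableSet_lt measurable_const measurable_norm

theorem setIntegral_div_sub_eq_comp_sub_left (G : ℝ → ℝ) (a ε : ℝ) :
    ∫ u in {u : ℝ | ε < |u - a|}, G u / (a - u) = ∫ t in {t : ℝ | ε < |t|}, G (a - t) / t := by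
  have h := (Measure.measurePreserving_sub_left volume a).setIntegral_preimage_emb
    (MeasurableEquiv.subLeft a).measurableEmbedding (fun u => G u / (a - u)) {u | ε < |u - a|}
  simpa [preimage_ofPred_eq] using h.symm

theorem integrableOn_indicator_const_div {ε : ℝ} (hε : 0 < ε) (δ c : ℝ) :
    IntegrableOn (fun t => (Icc (-δ) δ).indicator (fun _ => c) t / t) {t : ℝ | ε < |t|} := by
  have hc : Integrable ((Icc (-δ) δ).indicator fun _ => c) :=
    (integrableOn_const (by simp)).integrable_indicator measurableSet_Icc
  refine (hc.norm.const_mul ε⁻¹).integrableOn.mono'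
    (hc.aestronglyMeasurable.div₀ measurable_id.aestronglyMeasurable).restrict ?_
  filter_upwards [ae_restrict_mem (measurableSet_lt measurable_const measurable_norm)] with t ht
  rw [norm_div, div_eq_inv_mul]
  have : ε ≤ ‖t‖ := le_of_lt ht
  gcongr

theorem setIntegral_div_sub_eq_setIntegral_pvIntegrand (hH : Integrable (pvIntegrand G δ a))
    {ε : ℝ} (hε : 0 < ε) : ∫ u in {u : ℝ | ε < |u - a|}, G u / (a - u) =
      ∫ t in {t : ℝ | ε < |t|}, pvIntegrand G δ a t := by
  set w : ℝ → ℝ := (Icc (-δ) δ).indicator fun _ => G a with hw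
  have hodd : ∫ t in {t : ℝ | ε < |t|}, w t / t = 0 := by
    refine setIntegral_eq_zero_of_odd (fun t => by simp)
      (measurableSet_lt measurable_const measurable_norm) fun t => ?_
    have : w (-t) = w t := by
      simp only [hw, indicator_apply, mem_Icc, neg_le_neg_iff, neg_le (a := t), and_comm]
    rw [this, div_neg]
  calc ∫ u in {u : ℝ | ε < |u - a|}, G u / (a - u)
      = ∫ t in {t : ℝ | ε < |t|}, (pvIntegrand G δ a t + w t / t) := by
        rw [setIntegral_div_sub_eq_comp_sub_left]
        simp only [pvIntegrand, ← add_div, ← hw, sub_add_cancel]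
    _ = ∫ t in {t : ℝ | ε < |t|}, pvIntegrand G δ a t := by
        rw [integral_add hH.integrableOn (integrableOn_indicator_const_div hε δ _), hodd, add_zero]

theorem tendsto_setIntegral_div_sub (hδ : 0 < δ) (hG : Integrable G)
    (hωint : IntegrableOn ω (Icc (-δ) δ)) (hω : DominatesQuotients ω G δ a) :
    Tendsto (fun ε => ∫ u in {u : ℝ | ε < |u - a|}, G u / (a - u)) (𝓝[>] 0)
      (𝓝 (∫ t, pvIntegrand G δ a t)) := by
  have hH := integrable_pvIntegrand hδ hG hωint hω
  refine (aecover_lt_abs.integral_tendsto_of_countably_generated hH).congr' ?_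
  filter_upwards [self_mem_nhdsWithin] with ε hε
  exact (setIntegral_div_sub_eq_setIntegral_pvIntegrand hH hε).symm

/-! ### Boundary values of the Cauchy transform -/

theorem integral_Icc_inv_add_mul_I (hδ : 0 < δ) (hb : 0 < b) :
    ∫ t in Icc (-δ) δ, ((t : ℂ) + b * I)⁻¹ = log (δ + b * I) - log (-δ + b * I) := by
  have hderiv : ∀ t ∈ uIcc (-δ) δ,
      HasDerivAt (fun t : ℝ => log (t + b * I)) ((t : ℂ) + b * I)⁻¹ t := fun t _ => by
    have hslit : (t : ℂ) + b * I ∈ slitPlane := Or.inr (by simpa using hb.ne')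
    simpa using (ofRealCLM.hasDerivAt.add_const (b * I)).clog_real hslit
  have hcont : Continuous fun t : ℝ => ((t : ℂ) + b * I)⁻¹ :=
    Continuous.inv₀ (by fun_prop) fun t => ofReal_add_mul_I_ne_zero t hb.ne'
  rw [integral_Icc_eq_integral_Ioc, ← intervalIntegral.integral_of_le (by linarith),
    intervalIntegral.integral_eq_sub_of_hasDerivAt hderiv (hcont.intervalIntegrable _ _),
    ofReal_neg]

theorem tendsto_integral_Icc_inv_add_mul_I (hδ : 0 < δ) :
    Tendsto (fun b : ℝ => ∫ t in Icc (-δ) δ, ((t : ℂ) + b * I)⁻¹) (𝓝[>] 0)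
      (𝓝 (-(Real.pi * I))) := by
  have hpath : ∀ x : ℝ, Tendsto (fun b : ℝ => (x : ℂ) + b * I) (𝓝[>] 0) (𝓝 x) := fun x => by
    have : Continuous fun b : ℝ => (x : ℂ) + b * I := by fun_prop
    simpa using (this.tendsto 0).mono_left nhdsWithin_le_nhds
  have hright : Tendsto (fun b : ℝ => log (δ + b * I)) (𝓝[>] 0) (𝓝 (log δ)) :=
    (continuousAt_clog (ofReal_mem_slitPlane.mpr hδ)).tendsto.comp (hpath δ)
  have hleft : Tendsto (fun b : ℝ => log (-δ + b * I)) (𝓝[>] 0) (𝓝 (log δ + Real.pi * I)) := by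
    have := tendsto_log_nhdsWithin_im_nonneg_of_re_neg_of_im_zero (z := (-δ : ℝ))
      (by simpa using hδ) (ofReal_im _)
    rw [norm_real, norm_neg, Real.norm_of_nonneg hδ.le, ofReal_log hδ.le] at this
    refine (this.comp (tendsto_nhdsWithin_iff.mpr ⟨hpath (-δ), ?_⟩)).congr fun b => by simp
    filter_upwards [self_mem_nhdsWithin] with b hb
    simpa using le_of_lt hb
  have hlim := hright.sub hleft
  rw [sub_add_cancel_left] at hlim
  refine hlim.congr' ?_
  filter_upwards [self_mem_nhdsWithin] with b hb
  exact (integral_Icc_inv_add_mul_I hδ hb).symm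

theorem norm_mul_I_div_add_mul_I_le_one (t b : ℝ) : ‖b * I / (t + b * I)‖ ≤ 1 := by
  rw [norm_div]
  refine div_le_one_of_le₀ ?_ (norm_nonneg _)
  simpa using abs_im_le_norm ((t : ℂ) + b * I)

theorem norm_mul_I_div_add_mul_I_le (hδ : 0 < δ) (hb : 0 ≤ b) {t : ℝ} (ht : t ∉ Icc (-δ) δ) :
    ‖b * I / (t + b * I)‖ ≤ b / δ := by
  have hδt : δ ≤ |t| := (not_le.mp fun h => ht (abs_le.mp h)).le
  have hre : |t| ≤ ‖(t : ℂ) + b * I‖ := by simpa using abs_re_le_norm ((t : ℂ) + b * I)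
  rw [norm_div, norm_mul, norm_I, mul_one, norm_real, Real.norm_of_nonneg hb]
  gcongr
  exact hδt.trans hre

theorem continuous_mul_I_div_add_mul_I (hb : b ≠ 0) :
    Continuous fun t : ℝ => b * I / (t + b * I) :=
  Continuous.div₀ (by fun_prop) (by fun_prop) fun t => ofReal_add_mul_I_ne_zero t hb

theorem integrable_pvIntegrand_mul (hb : b ≠ 0) (hH : Integrable (pvIntegrand G δ a)) :
    Integrable fun t : ℝ => pvIntegrand G δ a t * (b * I / (t + b * I)) :=
  hH.ofReal.mul_bdd (continuous_mul_I_div_add_mul_I hb).aestronglyMeasurable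
    (.of_forall fun t => norm_mul_I_div_add_mul_I_le_one t b)

-- The kernel is split as `1 / (t + ib) = 1 / t - (ib / (t + ib)) / t`.
theorem div_add_mul_I_eq (G : ℝ → ℝ) (δ a : ℝ) (hb : b ≠ 0) {t : ℝ} (ht : t ≠ 0) :
    (G (a - t) : ℂ) / (t + b * I) = pvIntegrand G δ a t
      + (Icc (-δ) δ).indicator (fun t : ℝ => G a * ((t : ℂ) + b * I)⁻¹) t
      - pvIntegrand G δ a t * (b * I / (t + b * I)) := by
  have ht' : (t : ℂ) ≠ 0 := ofReal_ne_zero.mpr ht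
  have hne := ofReal_add_mul_I_ne_zero t hb
  by_cases h : t ∈ Icc (-δ) δ
  · simp only [pvIntegrand, indicator_of_mem h]
    push_cast
    field_simp
    ring
  · simp only [pvIntegrand, indicator_of_notMem h]
    push_cast
    field_simp
    ring

theorem cauchyTransform_add_mul_I (hb : b ≠ 0) (hH : Integrable (pvIntegrand G δ a)) :
    cauchyTransform G (a + b * I) = (∫ t, pvIntegrand G δ a t : ℝ)
      + G a * (∫ t in Icc (-δ) δ, ((t : ℂ) + b * I)⁻¹)
      - ∫ t, pvIntegrand G δ a t * (b * I / (t + b * I)) := by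
  have hwindow : Integrable
      ((Icc (-δ) δ).indicator fun t : ℝ => (G a : ℂ) * ((t : ℂ) + b * I)⁻¹) := by
    refine IntegrableOn.integrable_indicator ?_ measurableSet_Icc
    refine Continuous.integrableOn_Icc (continuous_const.mul (Continuous.inv₀ (by fun_prop) ?_))
    exact fun t => ofReal_add_mul_I_ne_zero t hb
  have hHc : Integrable fun t : ℝ => (pvIntegrand G δ a t : ℂ) := hH.ofReal
  have hregular : Integrable fun t : ℝ => (pvIntegrand G δ a t : ℂ)
      + (Icc (-δ) δ).indicator (fun t : ℝ => (G a : ℂ) * ((t : ℂ) + b * I)⁻¹) t :=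
    hHc.add hwindow
  calc cauchyTransform G (a + b * I)
      = ∫ t : ℝ, (G (a - t) : ℂ) / (t + b * I) := by
        rw [cauchyTransform, ← integral_sub_left_eq_self _ volume a]
        congr with t
        push_cast
        ring_nf
    _ = ∫ t : ℝ, ((pvIntegrand G δ a t : ℂ)
          + (Icc (-δ) δ).indicator (fun t : ℝ => G a * ((t : ℂ) + b * I)⁻¹) t
          - pvIntegrand G δ a t * (b * I / (t + b * I))) := by
        refine integral_congr_ae ?_
        filter_upwards [Measure.ae_ne volume (0 : ℝ)] with t ht
        exact div_add_mul_I_eq G δ a hb ht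
    _ = _ := by
        rw [integral_sub hregular (integrable_pvIntegrand_mul hb hH),
          integral_add hHc hwindow, integral_complex_ofReal,
          integral_indicator measurableSet_Icc, integral_const_mul]

theorem norm_integral_pvIntegrand_mul_le (hδ : 0 < δ) (hb : 0 < b) (hG : Integrable G)
    (hωint : IntegrableOn ω (Icc (-δ) δ)) (hω : DominatesQuotients ω G δ a) :
    ‖∫ t, pvIntegrand G δ a t * (b * I / (t + b * I))‖
      ≤ (∫ t in Icc (-δ) δ, ω t * ‖b * I / (t + b * I)‖) + b / δ ^ 2 * ∫ u, |G u| := by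
  have hωi : Integrable
      ((Icc (-δ) δ).indicator fun t : ℝ => ω t * ‖b * I / (t + b * I)‖) := by
    refine IntegrableOn.integrable_indicator ?_ measurableSet_Icc
    exact hωint.mul_bdd (continuous_mul_I_div_add_mul_I hb.ne').norm.aestronglyMeasurable
      (.of_forall fun t => by simpa using norm_mul_I_div_add_mul_I_le_one t b)
  have hGi := integrable_mul_abs_comp_sub_left hG (b / δ ^ 2) a
  have hbound : ∀ t : ℝ, ‖pvIntegrand G δ a t * (b * I / (t + b * I))‖
      ≤ (Icc (-δ) δ).indicator (fun t : ℝ => ω t * ‖b * I / (t + b * I)‖) t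
        + b / δ ^ 2 * |G (a - t)| := fun t => by
    rw [norm_mul, norm_real, Real.norm_eq_abs]
    by_cases ht : t ∈ Icc (-δ) δ
    · rw [indicator_of_mem ht]
      have := mul_le_mul_of_nonneg_right (abs_pvIntegrand_le_of_mem hω ht)
        (norm_nonneg (b * I / (t + b * I)))
      exact this.trans (le_add_of_nonneg_right (by positivity))
    · rw [indicator_of_notMem ht, zero_add]
      calc |pvIntegrand G δ a t| * ‖b * I / (t + b * I)‖
          ≤ δ⁻¹ * |G (a - t)| * (b / δ) :=
            mul_le_mul (abs_pvIntegrand_le_of_notMem hδ ht)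
              (norm_mul_I_div_add_mul_I_le hδ hb.le ht) (norm_nonneg _) (by positivity)
        _ = b / δ ^ 2 * |G (a - t)| := by field_simp
  have hsum : Integrable fun t : ℝ =>
      (Icc (-δ) δ).indicator (fun t : ℝ => ω t * ‖b * I / (t + b * I)‖) t
        + b / δ ^ 2 * |G (a - t)| := hωi.add hGi
  refine (norm_integral_le_of_norm_le hsum (.of_forall hbound)).trans_eq ?_
  rw [integral_add hωi hGi, integral_indicator measurableSet_Icc, integral_const_mul,
    integral_sub_left_eq_self (fun u => |G u|) volume a]

theorem tendsto_integral_mul_norm_mul_I_div_add_mul_I {s : Set ℝ} (hωint : IntegrableOn ω s) :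
    Tendsto (fun b : ℝ => ∫ t in s, ω t * ‖b * I / (t + b * I)‖) (𝓝[>] 0) (𝓝 0) := by
  suffices Tendsto (fun b : ℝ => ∫ t in s, ω t * ‖b * I / (t + b * I)‖) (𝓝[>] 0)
      (𝓝 (∫ _ in s, (0 : ℝ))) by rwa [integral_zero] at this
  refine tendsto_integral_filter_of_dominated_convergence (fun t => |ω t|) ?_ ?_ hωint.abs ?_
  · filter_upwards [self_mem_nhdsWithin] with b hb
    exact hωint.aestronglyMeasurable.mul
      (continuous_mul_I_div_add_mul_I (ne_of_gt hb)).norm.aestronglyMeasurable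
  · refine .of_forall fun b => .of_forall fun t => ?_
    rw [norm_mul, norm_norm, Real.norm_eq_abs]
    exact mul_le_of_le_one_right (abs_nonneg _) (norm_mul_I_div_add_mul_I_le_one t b)
  · filter_upwards [ae_restrict_of_ae (Measure.ae_ne volume (0 : ℝ))] with t ht
    have hcont : ContinuousAt (fun b : ℝ => ω t * ‖b * I / (t + b * I)‖) 0 := by
      refine continuousAt_const.mul (ContinuousAt.norm (ContinuousAt.div (by fun_prop)
        (by fun_prop) ?_))
      simpa using ht
    simpa using hcont.tendsto.mono_left nhdsWithin_le_nhds

theorem tendstoUniformlyOn_cauchyTransform {s : Set ℝ} {M : ℝ} (hδ : 0 < δ) (hG : Integrable G)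
    (hωint : IntegrableOn ω (Icc (-δ) δ)) (hω : ∀ a ∈ s, DominatesQuotients ω G δ a)
    (hM : ∀ a ∈ s, |G a| ≤ M) :
    TendstoUniformlyOn (fun b a : ℝ => cauchyTransform G (a + b * I))
      (fun a => (∫ t, pvIntegrand G δ a t : ℝ) - Real.pi * G a * I) (𝓝[>] 0) s := by
  set W : ℝ → ℂ := fun b => ∫ t in Icc (-δ) δ, ((t : ℂ) + b * I)⁻¹
  set E : ℝ → ℝ := fun b => M * ‖W b + Real.pi * I‖
    + ((∫ t in Icc (-δ) δ, ω t * ‖b * I / (t + b * I)‖) + b / δ ^ 2 * ∫ u, |G u|)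
  have hE : Tendsto E (𝓝[>] 0) (𝓝 0) := by
    have hW : Tendsto (fun b => M * ‖W b + Real.pi * I‖) (𝓝[>] 0) (𝓝 0) := by
      simpa using ((tendsto_integral_Icc_inv_add_mul_I hδ).add_const (Real.pi * I)).norm.const_mul M
    have hfar : Tendsto (fun b : ℝ => b / δ ^ 2 * ∫ u, |G u|) (𝓝[>] 0) (𝓝 0) := by
      refine tendsto_nhdsWithin_of_tendsto_nhds (Continuous.tendsto' (by fun_prop) _ _ ?_)
      rw [zero_div, zero_mul]
    simpa only [add_zero] using
      hW.add ((tendsto_integral_mul_norm_mul_I_div_add_mul_I hωint).add hfar)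
  refine tendstoUniformlyOn_of_dist_le hE ?_
  filter_upwards [self_mem_nhdsWithin] with b (hb : 0 < b) a ha
  have hH := integrable_pvIntegrand hδ hG hωint (hω a ha)
  have hsub : cauchyTransform G (a + b * I)
        - ((∫ t, pvIntegrand G δ a t : ℝ) - Real.pi * G a * I)
      = G a * (W b + Real.pi * I) - ∫ t, pvIntegrand G δ a t * (b * I / (t + b * I)) := by
    rw [cauchyTransform_add_mul_I hb.ne' hH]
    ring
  rw [dist_comm, dist_eq_norm, hsub]
  refine (norm_sub_le _ _).trans (add_le_add ?_
    (norm_integral_pvIntegrand_mul_le hδ hb hG hωint (hω a ha)))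
  rw [norm_mul, norm_real]
  exact mul_le_mul_of_nonneg_right (hM a ha) (norm_nonneg _)

end SokhotskiPlemelj

section HalfLine

variable {g ω : ℝ → ℝ} {a ρ R δ : ℝ}

theorem setIntegral_indicator_Ioi_div_sub (g : ℝ → ℝ) (a ε : ℝ) :
    ∫ u in {u : ℝ | ε < |u - a|}, (Ioi 0).indicator g u / (a - u)
      = ∫ u in {u : ℝ | 0 < u ∧ ε < |u - a|}, g u / (a - u) := by
  have hind : ∀ u, (Ioi 0).indicator g u / (a - u)
      = (Ioi 0).indicator (fun u => g u / (a - u)) u := fun u => by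
    by_cases hu : u ∈ Ioi 0 <;> simp [hu]
  simp_rw [hind]
  rw [setIntegral_indicator measurableSet_Ioi, inter_comm]
  rfl

theorem hasPV_integral_pvIntegrand (hg : IntegrableOn g (Ioi 0)) (hδ : 0 < δ)
    (hωint : IntegrableOn ω (Icc (-δ) δ))
    (hω : DominatesQuotients ω ((Ioi 0).indicator g) δ a) :
    HasPV g a (∫ t, pvIntegrand ((Ioi 0).indicator g) δ a t) := by
  have h := tendsto_setIntegral_div_sub hδ (hg.integrable_indicator measurableSet_Ioi) hωint hω
  simpa only [HasPV, setIntegral_indicator_Ioi_div_sub] using h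

theorem exists_dominatesQuotients_indicator_Ioi (hlip : LocallyLipschitzOn (Ioi 0) g)
    (hρ : 0 < ρ) (R : ℝ) :
    ∃ K : ℝ, ∀ a ∈ Icc ρ R, DominatesQuotients (fun _ => K) ((Ioi 0).indicator g) (ρ / 2) a := by
  have hsub : Icc (ρ / 2) (R + ρ / 2) ⊆ Ioi 0 := fun u hu => (half_pos hρ).trans_le hu.1
  obtain ⟨K, hK⟩ := (hlip.mono hsub).exists_lipschitzOnWith_of_compact isCompact_Icc
  refine ⟨K, fun a ha t ht => ?_⟩
  have ha' : a ∈ Icc (ρ / 2) (R + ρ / 2) := ⟨by linarith [ha.1], by linarith [ha.2]⟩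
  have hat : a - t ∈ Icc (ρ / 2) (R + ρ / 2) :=
    ⟨by linarith [ha.1, ht.2], by linarith [ha.2, ht.1]⟩
  rw [indicator_of_mem (hsub ha'), indicator_of_mem (hsub hat), abs_div]
  refine div_le_of_le_mul₀ (abs_nonneg t) K.coe_nonneg ?_
  simpa [Real.dist_eq] using hK.dist_le_mul _ hat _ ha'

theorem exists_hasPV (hg : IntegrableOn g (Ioi 0)) (hlip : LocallyLipschitzOn (Ioi 0) g)
    (ha : 0 < a) : ∃ L, HasPV g a L := by
  obtain ⟨K, hK⟩ := exists_dominatesQuotients_indicator_Ioi hlip ha a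
  exact ⟨_, hasPV_integral_pvIntegrand hg (half_pos ha) (integrableOn_const (by simp))
    (hK a ⟨le_rfl, le_rfl⟩)⟩

theorem tendstoUniformlyOn_add_mul_I_mul {F : ℝ → ℝ → ℂ} {f : ℝ → ℂ} {s : Set ℝ} {B : ℝ}
    (hF : TendstoUniformlyOn F f (𝓝[>] 0) s) (hs : IsCompact s) (hf : ∀ a ∈ s, ‖f a‖ ≤ B) :
    TendstoUniformlyOn (fun b a : ℝ => (a + b * Complex.I) * F b a) (fun a => a * f a)
      (𝓝[>] 0) s := by
  have hμ : TendstoUniformlyOn (fun b a : ℝ => (a : ℂ) + b * Complex.I) (fun a : ℝ => (a : ℂ))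
      (𝓝[>] 0) s := by
    refine tendstoUniformlyOn_of_dist_le (E := fun b => |b|) ?_ (.of_forall fun b a _ => by simp)
    exact tendsto_nhdsWithin_of_tendsto_nhds (Continuous.tendsto' (by fun_prop) _ _ abs_zero)
  rw [← tendstoLocallyUniformlyOn_iff_tendstoUniformlyOn_of_compact hs] at hμ hF ⊢
  refine hμ.mul₀_of_isBoundedUnder hF (fun x _ => ?_) fun x _ =>
    ⟨B, eventually_map.mpr ?_⟩
  · have : Continuous fun a : ℝ => dist (a : ℂ) 0 := by fun_prop
    exact this.continuousWithinAt.isBoundedUnder_le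
  · filter_upwards [eventually_mem_nhdsWithin] with a ha
    simpa using hf a ha

theorem tendstoUniformlyOn_mul_cauchyTransform_indicator_Ioi (hg : IntegrableOn g (Ioi 0))
    (hlip : LocallyLipschitzOn (Ioi 0) g) {P : ℝ → ℝ} (hP : ∀ a, 0 < a → HasPV g a (P a))
    (hρ : 0 < ρ) (R : ℝ) :
    TendstoUniformlyOn (fun b a : ℝ =>
        (a + b * Complex.I) * cauchyTransform ((Ioi 0).indicator g) (a + b * Complex.I))
      (fun a => a * (P a - Real.pi * g a * Complex.I)) (𝓝[>] 0) (Icc ρ R) := by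
  set G := (Ioi 0).indicator g
  have hG : Integrable G := hg.integrable_indicator measurableSet_Ioi
  have hGg : ∀ a ∈ Icc ρ R, G a = g a := fun a ha => indicator_of_mem (hρ.trans_le ha.1) g
  obtain ⟨K, hK⟩ := exists_dominatesQuotients_indicator_Ioi hlip hρ R
  have hKint : IntegrableOn (fun _ => K) (Icc (-(ρ / 2)) (ρ / 2)) := integrableOn_const (by simp)
  obtain ⟨M, hM⟩ := isCompact_Icc.exists_bound_of_continuousOn
    (hlip.continuousOn.mono fun a ha => hρ.trans_le ha.1)
  have hPV : ∀ a ∈ Icc ρ R, ∫ t, pvIntegrand G (ρ / 2) a t = P a := fun a ha =>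
    tendsto_nhds_unique (hasPV_integral_pvIntegrand hg (half_pos hρ) hKint (hK a ha))
      (hP a (hρ.trans_le ha.1))
  have hGM : ∀ a ∈ Icc ρ R, |G a| ≤ M := fun a ha => by
    rw [hGg a ha]
    exact hM a ha
  have hlim := (tendstoUniformlyOn_cauchyTransform (half_pos hρ) hG hKint hK hGM).congr_right
    (g := fun a => (P a : ℂ) - Real.pi * g a * Complex.I) fun a ha => by
      simp only [hPV a ha, hGg a ha]
  refine tendstoUniformlyOn_add_mul_I_mul hlim isCompact_Icc
    (B := (∫ _ in Icc (-(ρ / 2)) (ρ / 2), K) + (ρ / 2)⁻¹ * (∫ u, |G u|) + Real.pi * M)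
    fun a ha => ?_
  have hPle : |P a| ≤ _ :=
    hPV a ha ▸ abs_integral_pvIntegrand_le (half_pos hρ) hG hKint (hK a ha)
  refine (norm_sub_le _ _).trans (add_le_add (by simpa using hPle) ?_)
  simpa [abs_of_pos Real.pi_pos] using mul_le_mul_of_nonneg_left (hM a ha) Real.pi_pos.le

end HalfLine

/-! ### Profiles with slope bounded below -/

section ShearProfile

open Asymptotics

variable {V g : ℝ → ℝ} {c : ℝ} {μ : ℂ}

theorem integrableOn_Ioi_of_isBigO_pow_two_inv {E : Type*} [NormedAddCommGroup E] {f : ℝ → E}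
    {a : ℝ} (hf : ContinuousOn f (Ici a)) (h : f =O[atTop] fun y : ℝ => (y ^ 2)⁻¹) :
    IntegrableOn f (Ioi a) := by
  refine ((hf.locallyIntegrableOn measurableSet_Ici).integrableOn_of_isBigO_atTop
    (h.congr_right fun y => ?_)
    (integrableAtFilter_rpow_atTop_iff.mpr (by norm_num : (-2 : ℝ) < -1))).mono_set
    Ioi_subset_Ici_self
  rw [Real.rpow_neg_ofNat, zpow_neg]
  norm_cast

theorem sub_norm_le_norm_sub_ofReal (μ : ℂ) (x : ℝ) : x - ‖μ‖ ≤ ‖μ - x‖ := by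
  have := norm_sub_norm_le (x : ℂ) μ
  rw [norm_sub_rev, Complex.norm_real] at this
  exact (sub_le_sub_right (Real.le_norm_self x) _).trans this

theorem exists_pos_le_norm_sub_ofReal (hμ : μ ∉ Complex.ofReal '' Ici 0) :
    ∃ d > 0, ∀ u : ℝ, 0 ≤ u → d ≤ ‖μ - u‖ := by
  have hclosed : IsClosed (Complex.ofReal '' Ici 0) :=
    Complex.isometry_ofReal.isClosedEmbedding.isClosedMap _ isClosed_Ici
  have hne : (Complex.ofReal '' Ici 0).Nonempty := nonempty_Ici.image _
  refine ⟨_, (hclosed.notMem_iff_infDist_pos hne).mp hμ, fun u hu => ?_⟩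
  rw [← dist_eq_norm]
  exact Metric.infDist_le_dist_of_mem (mem_image_of_mem _ hu)

theorem integrableOn_ofReal_div_sub {f : ℝ → ℝ} (hf : IntegrableOn f (Ioi 0))
    (hV : Continuous V) {d : ℝ} (hd : 0 < d) (hμ : ∀ y, 0 ≤ y → d ≤ ‖μ - (V y : ℂ)‖) :
    IntegrableOn (fun y => (f y : ℂ) / (μ - V y)) (Ioi 0) := by
  have hcont : Continuous fun y => μ - (V y : ℂ) :=
    continuous_const.sub (Complex.continuous_ofReal.comp hV)
  refine (hf.norm.const_mul d⁻¹).mono'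
    (hf.ofReal.aestronglyMeasurable.div₀ hcont.aestronglyMeasurable) ?_
  filter_upwards [ae_restrict_mem measurableSet_Ioi] with y hy
  rw [norm_div, Complex.norm_real, div_eq_inv_mul]
  have := hμ y (le_of_lt hy)
  gcongr

theorem hasDerivAt_inv_deriv_mul_sub (hV : ContDiff ℝ 2 V) {y : ℝ}
    (hV' : deriv V y ≠ 0) (hμ : μ - (V y : ℂ) ≠ 0) :
    HasDerivAt (fun y => (((deriv V y : ℝ) : ℂ) * (μ - V y))⁻¹)
      (((μ - (V y : ℂ)) ^ 2)⁻¹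
        - ((deriv (deriv V) y / deriv V y ^ 2 : ℝ) : ℂ) / (μ - V y)) y := by
  have hV'0 : ((deriv V y : ℝ) : ℂ) ≠ 0 := Complex.ofReal_ne_zero.mpr hV'
  have h0 := (hV.differentiable two_ne_zero y).hasDerivAt.ofReal_comp
  have h1 := (hV.differentiable_deriv_two y).hasDerivAt.ofReal_comp
  refine ((h1.mul (h0.const_sub μ)).inv (mul_ne_zero hV'0 hμ)).congr_deriv ?_
  simp only [Pi.mul_apply]
  push_cast
  field_simp
  ring

section PositiveSlope

variable (hV : Differentiable ℝ V) (hc : 0 < c) (hcV : ∀ z, 0 ≤ z → c ≤ deriv V z)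
include hV hcV

theorem mul_sub_le_sub_of_le_deriv {x y : ℝ} (hx : 0 ≤ x) (hxy : x ≤ y) :
    c * (y - x) ≤ V y - V x :=
  (convex_Ici 0).mul_sub_le_image_sub_of_le_deriv hV.continuous.continuousOn hV.differentiableOn
    (fun z hz => hcV z (interior_subset hz)) x hx y (hx.trans hxy) hxy

theorem mul_dist_le_dist_of_le_deriv {x y : ℝ} (hx : 0 ≤ x) (hy : 0 ≤ y) :
    c * dist x y ≤ dist (V x) (V y) := by
  wlog hxy : x ≤ y generalizing x y
  · simpa only [dist_comm] using this hy hx (le_of_not_ge hxy)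
  rw [dist_comm x, dist_comm (V x), Real.dist_eq, Real.dist_eq, abs_of_nonneg (sub_nonneg.mpr hxy)]
  exact (mul_sub_le_sub_of_le_deriv hV hcV hx hxy).trans (le_abs_self _)

include hc

theorem strictMonoOn_Ici_of_le_deriv : StrictMonoOn V (Ici 0) :=
  strictMonoOn_of_deriv_pos (convex_Ici 0) hV.continuous.continuousOn
    fun z hz => hc.trans_le (hcV z (interior_subset hz))

theorem tendsto_atTop_of_le_deriv : Tendsto V atTop atTop := by
  refine tendsto_atTop_mono' _ ?_
    (tendsto_atTop_add_const_left _ (V 0) (tendsto_id.const_mul_atTop hc))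
  filter_upwards [eventually_ge_atTop 0] with y hy
  have := mul_sub_le_sub_of_le_deriv hV hcV le_rfl hy
  rw [id]
  linarith

theorem image_Ioi_zero_of_le_deriv (hV0 : V 0 = 0) : V '' Ioi 0 = Ioi 0 := by
  have hmono := strictMonoOn_Ici_of_le_deriv hV hc hcV
  refine Subset.antisymm ?_ fun u hu => ?_
  · rintro _ ⟨z, hz, rfl⟩
    simpa only [hV0, mem_Ioi] using hmono self_mem_Ici (Ioi_subset_Ici_self hz) hz
  · obtain ⟨z, hz, rfl⟩ := isPreconnected_Ici.intermediate_value_Ici self_mem_Ici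
      (le_principal_iff.mpr (Ici_mem_atTop (0 : ℝ))) hV.continuous.continuousOn
      (tendsto_atTop_of_le_deriv hV hc hcV) (hV0.symm ▸ le_of_lt hu : V 0 ≤ u)
    refine ⟨z, mem_Ioi.mpr (lt_of_le_of_ne hz ?_), rfl⟩
    rintro rfl
    exact hV0.not_gt hu

theorem isBigO_id_const_sub_ofReal (μ : ℂ) :
    (fun y : ℝ => y) =O[atTop] fun y => μ - (V y : ℂ) := by
  refine IsBigO.of_bound (2 / c) ?_
  have hlarge := (tendsto_id.const_mul_atTop (half_pos hc)).eventually_ge_atTop (‖μ‖ - V 0)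
  filter_upwards [eventually_ge_atTop 0, hlarge] with y hy hyμ
  have hgrow := mul_sub_le_sub_of_le_deriv hV hcV le_rfl hy
  have htri := sub_norm_le_norm_sub_ofReal μ (V y)
  rw [Real.norm_of_nonneg hy, div_mul_eq_mul_div, le_div_iff₀ hc]
  simp only [id] at hyμ
  linarith

theorem integrableOn_inv_sub_sq (hμ : ∀ y, 0 ≤ y → μ - (V y : ℂ) ≠ 0) :
    IntegrableOn (fun y => ((μ - (V y : ℂ)) ^ 2)⁻¹) (Ioi 0) := by
  have hcont : Continuous fun y => μ - (V y : ℂ) :=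
    continuous_const.sub (Complex.continuous_ofReal.comp hV.continuous)
  refine integrableOn_Ioi_of_isBigO_pow_two_inv
    ((hcont.pow 2).continuousOn.inv₀ fun y hy => pow_ne_zero 2 (hμ y hy)) ?_
  refine ((isBigO_id_const_sub_ofReal hV hc hcV μ).pow 2).inv_rev ?_
  filter_upwards [eventually_gt_atTop 0] with y hy h
  exact absurd h (pow_pos hy 2).ne'

theorem tendsto_inv_deriv_mul_sub (μ : ℂ) :
    Tendsto (fun y => (((deriv V y : ℝ) : ℂ) * (μ - V y))⁻¹) atTop (𝓝 0) := by
  refine tendsto_inv₀_cobounded.comp (tendsto_norm_atTop_iff_cobounded.mp ?_)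
  have hsub : Tendsto (fun y => ‖μ - (V y : ℂ)‖) atTop atTop :=
    tendsto_atTop_mono (fun y => sub_norm_le_norm_sub_ofReal μ (V y))
      (tendsto_atTop_add_const_right _ (-‖μ‖) (tendsto_atTop_of_le_deriv hV hc hcV))
  refine tendsto_atTop_mono' _ ?_ (hsub.const_mul_atTop hc)
  filter_upwards [eventually_ge_atTop 0] with y hy
  rw [norm_mul, Complex.norm_real]
  gcongr
  exact (hcV y hy).trans (le_abs_self _)

end PositiveSlope

section ChangeOfVariables

variable (hc : 0 < c) (hcV : ∀ z, 0 ≤ z → c ≤ deriv V z)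
include hc hcV

theorem integrableOn_deriv_deriv_div_sq (hV : ContDiff ℝ 2 V)
    (hV'' : IntegrableOn (deriv (deriv V)) (Ioi 0)) :
    IntegrableOn (fun z => deriv (deriv V) z / deriv V z ^ 2) (Ioi 0) := by
  have hV' : Continuous (deriv V) := hV.continuous_deriv one_le_two
  refine (hV''.norm.const_mul (c ^ 2)⁻¹).mono'
    (hV''.aestronglyMeasurable.div₀ (hV'.pow 2).aestronglyMeasurable) ?_
  filter_upwards [ae_restrict_mem measurableSet_Ioi] with z hz
  have := hcV z (le_of_lt hz)
  rw [norm_div, norm_pow, Real.norm_of_nonneg (hc.le.trans this), div_eq_inv_mul]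
  gcongr

theorem integral_inv_sub_sq_eq (hV : ContDiff ℝ 2 V) (hV0 : V 0 = 0)
    (hV'' : IntegrableOn (deriv (deriv V)) (Ioi 0))
    {d : ℝ} (hd : 0 < d) (hμ : ∀ y, 0 ≤ y → d ≤ ‖μ - (V y : ℂ)‖) :
    ∫ y in Ioi (0 : ℝ), ((μ - (V y : ℂ)) ^ 2)⁻¹
      = (∫ y in Ioi (0 : ℝ), ((deriv (deriv V) y / deriv V y ^ 2 : ℝ) : ℂ) / (μ - V y))
        - (((deriv V 0 : ℝ) : ℂ) * μ)⁻¹ := by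
  have hVd : Differentiable ℝ V := hV.differentiable two_ne_zero
  have hμ0 : ∀ y, 0 ≤ y → μ - (V y : ℂ) ≠ 0 := fun y hy =>
    norm_pos_iff.mp (hd.trans_le (hμ y hy))
  have hsq := integrableOn_inv_sub_sq hVd hc hcV hμ0
  have hdiv := integrableOn_ofReal_div_sub (integrableOn_deriv_deriv_div_sq hc hcV hV hV'')
    hVd.continuous hd hμ
  have hFTC := integral_Ioi_of_hasDerivAt_of_tendsto'
    (fun y hy => hasDerivAt_inv_deriv_mul_sub hV (hc.trans_le (hcV y hy)).ne' (hμ0 y hy))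
    (hsq.sub hdiv) (tendsto_inv_deriv_mul_sub hVd hc hcV μ)
  rw [integral_sub hsq hdiv, hV0, Complex.ofReal_zero, sub_zero, zero_sub,
    sub_eq_iff_eq_add] at hFTC
  rw [hFTC, neg_add_eq_sub]

theorem contDiffOn_deriv_deriv_div_pow (hV : ContDiff ℝ 3 V) :
    ContDiffOn ℝ 1 (fun z => deriv (deriv V) z / deriv V z ^ 3) (Ici 0) := by
  have h1 : ContDiff ℝ 2 (deriv V) := hV.deriv'
  have h2 : ContDiff ℝ 1 (deriv (deriv V)) := h1.deriv'
  exact h2.contDiffOn.div (h1.of_le one_le_two |>.pow 3).contDiffOn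
    fun z hz => pow_ne_zero 3 (hc.trans_le (hcV z hz)).ne'

variable (hg : ∀ z, 0 ≤ z → g (V z) = deriv (deriv V) z / deriv V z ^ 3)
include hg

theorem abs_deriv_mul_comp_eq {z : ℝ} (hz : 0 ≤ z) :
    |deriv V z| * g (V z) = deriv (deriv V) z / deriv V z ^ 2 := by
  have hpos := hc.trans_le (hcV z hz)
  rw [hg z hz, abs_of_pos hpos]
  field_simp

theorem locallyLipschitzOn_of_comp_eq (hV : ContDiff ℝ 3 V) (hV0 : V 0 = 0) :
    LocallyLipschitzOn (Ioi 0) g := by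
  have hVd : Differentiable ℝ V := hV.differentiable three_ne_zero
  intro u hu
  obtain ⟨Z, hZu, hZ⟩ := ((tendsto_atTop_of_le_deriv hVd hc hcV).eventually_gt_atTop u).and
    (eventually_ge_atTop 0) |>.exists
  have hsub : Icc 0 (V Z) ⊆ V '' Icc 0 Z := by
    simpa only [hV0] using intermediate_value_Icc hZ hVd.continuous.continuousOn
  obtain ⟨K, hK⟩ := ((contDiffOn_deriv_deriv_div_pow hc hcV hV).mono
    (Icc_subset_Ici_self : Icc 0 Z ⊆ Ici 0)).exists_lipschitzOnWith one_ne_zero (convex_Icc 0 Z)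
      isCompact_Icc
  refine ⟨K * c⁻¹.toNNReal, Icc 0 (V Z),
    mem_nhdsWithin_of_mem_nhds (Icc_mem_nhds hu hZu), LipschitzOnWith.of_dist_le_mul ?_⟩
  intro v hv w hw
  obtain ⟨x, hx, rfl⟩ := hsub hv
  obtain ⟨y, hy, rfl⟩ := hsub hw
  rw [hg x hx.1, hg y hy.1, NNReal.coe_mul, Real.coe_toNNReal _ (inv_nonneg.mpr hc.le), mul_assoc]
  refine (hK.dist_le_mul x hx y hy).trans (mul_le_mul_of_nonneg_left ?_ K.coe_nonneg)
  rw [le_inv_mul_iff₀ hc]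
  exact mul_dist_le_dist_of_le_deriv hVd hcV hx.1 hy.1

theorem integrableOn_of_comp_eq (hV : ContDiff ℝ 2 V) (hV0 : V 0 = 0)
    (hV'' : IntegrableOn (deriv (deriv V)) (Ioi 0)) :
    IntegrableOn g (Ioi 0) := by
  have hVd : Differentiable ℝ V := hV.differentiable two_ne_zero
  rw [← image_Ioi_zero_of_le_deriv hVd hc hcV hV0,
    integrableOn_image_iff_integrableOn_abs_deriv_smul measurableSet_Ioi
    (fun z _ => (hVd z).hasDerivAt.hasDerivWithinAt)
    ((strictMonoOn_Ici_of_le_deriv hVd hc hcV).injOn.mono Ioi_subset_Ici_self)]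
  exact (integrableOn_deriv_deriv_div_sq hc hcV hV hV'').congr_fun
    (fun z hz => (abs_deriv_mul_comp_eq hc hcV hg (le_of_lt hz)).symm) measurableSet_Ioi

theorem cauchyTransform_indicator_Ioi_eq (hV : Differentiable ℝ V) (hV0 : V 0 = 0) (μ : ℂ) :
    cauchyTransform ((Ioi 0).indicator g) μ
      = ∫ y in Ioi (0 : ℝ), ((deriv (deriv V) y / deriv V y ^ 2 : ℝ) : ℂ) / (μ - V y) := by
  have hind : ∀ u : ℝ, (((Ioi 0).indicator g u : ℝ) : ℂ) / (μ - u)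
      = (Ioi 0).indicator (fun u : ℝ => (g u : ℂ) / (μ - u)) u := fun u => by
    by_cases hu : u ∈ Ioi 0 <;> simp [hu]
  calc cauchyTransform ((Ioi 0).indicator g) μ
      = ∫ u in V '' Ioi 0, (g u : ℂ) / (μ - u) := by
        simp_rw [cauchyTransform, hind]
        rw [integral_indicator measurableSet_Ioi, image_Ioi_zero_of_le_deriv hV hc hcV hV0]
    _ = ∫ y in Ioi (0 : ℝ), |deriv V y| • ((g (V y) : ℂ) / (μ - V y)) :=
        integral_image_eq_integral_abs_deriv_smul measurableSet_Ioi
          (fun z _ => (hV z).hasDerivAt.hasDerivWithinAt)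
          ((strictMonoOn_Ici_of_le_deriv hV hc hcV).injOn.mono Ioi_subset_Ici_self) _
    _ = _ := setIntegral_congr_fun measurableSet_Ioi fun y hy => by
        simp only [← abs_deriv_mul_comp_eq hc hcV hg (le_of_lt hy), Complex.real_smul,
          Complex.ofReal_mul, mul_div_assoc]

theorem PhiInf_eq_add_mul_cauchyTransform (hV : ContDiff ℝ 2 V) (hV0 : V 0 = 0)
    (hV'' : IntegrableOn (deriv (deriv V)) (Ioi 0))
    (hμ : μ ∉ Complex.ofReal '' Ici 0) :
    PhiInf V μ = -1 / (deriv V 0 : ℝ) + μ * cauchyTransform ((Ioi 0).indicator g) μ := by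
  have hVd : Differentiable ℝ V := hV.differentiable two_ne_zero
  obtain ⟨d, hd, hdμ⟩ := exists_pos_le_norm_sub_ofReal hμ
  have hVnonneg : ∀ y, 0 ≤ y → 0 ≤ V y := fun y hy => by
    simpa only [hV0] using (strictMonoOn_Ici_of_le_deriv hVd hc hcV).monotoneOn self_mem_Ici hy hy
  have hμ0 : μ ≠ 0 := by
    rintro rfl
    exact hμ ⟨0, self_mem_Ici, Complex.ofReal_zero⟩
  have hV'0 : ((deriv V 0 : ℝ) : ℂ) ≠ 0 :=
    Complex.ofReal_ne_zero.mpr (hc.trans_le (hcV 0 le_rfl)).ne'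
  rw [PhiInf, integral_inv_sub_sq_eq hc hcV hV hV0 hV'' hd fun y hy => hdμ _ (hVnonneg y hy),
    cauchyTransform_indicator_Ioi_eq hc hcV hg hVd hV0]
  field_simp
  ring

end ChangeOfVariables

section Decay

theorem exists_pos_le_of_tendsto_atTop {f : ℝ → ℝ} {a l : ℝ} (hf : ContinuousOn f (Ici a))
    (hpos : ∀ z, a ≤ z → 0 < f z) (hl : 0 < l) (hlim : Tendsto f atTop (𝓝 l)) :
    ∃ c > 0, ∀ z, a ≤ z → c ≤ f z := by
  obtain ⟨N, hN⟩ := eventually_atTop.mp (hlim.eventually_const_lt (half_lt_self hl))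
  obtain ⟨z₀, hz₀, hmin⟩ := isCompact_Icc.exists_isMinOn (nonempty_Icc.mpr (le_max_left a N))
    (hf.mono Icc_subset_Ici_self)
  refine ⟨min (f z₀) (l / 2), lt_min (hpos z₀ hz₀.1) (half_pos hl), fun z hz => ?_⟩
  rcases le_total z (max a N) with hzN | hNz
  · exact min_le_of_left_le (hmin ⟨hz, hzN⟩)
  · exact min_le_of_right_le (hN z ((le_max_right a N).trans hNz)).le

theorem deriv_sub_id (hV : Differentiable ℝ V) :
    deriv (fun w => V w - w) = fun z => deriv V z - 1 :=
  funext fun z => ((hV z).hasDerivAt.sub (hasDerivAt_id z)).deriv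

theorem tendsto_deriv_one_of_tendsto_iteratedDeriv (hV : Differentiable ℝ V)
    (h : Tendsto (iteratedDeriv 1 fun w => V w - w) atTop (𝓝 0)) :
    Tendsto (deriv V) atTop (𝓝 1) := by
  rw [iteratedDeriv_one, deriv_sub_id hV] at h
  simpa using h.add_const 1

theorem integrableOn_deriv_deriv_of_tendsto_iteratedDeriv (hV : ContDiff ℝ 2 V)
    (h : Tendsto (fun z => z ^ 2 * iteratedDeriv 2 (fun w => V w - w) z) atTop (𝓝 0)) :
    IntegrableOn (deriv (deriv V)) (Ioi 0) := by
  have hcont : Continuous (deriv (deriv V)) :=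
    ContDiff.continuous_deriv (n := 1) hV.deriv' le_rfl
  have hiter : iteratedDeriv 2 (fun w => V w - w) = deriv (deriv V) := by
    rw [iteratedDeriv_succ, iteratedDeriv_one, deriv_sub_id (hV.differentiable two_ne_zero)]
    exact funext fun z => deriv_sub_const _
  rw [hiter] at h
  refine integrableOn_Ioi_of_isBigO_pow_two_inv hcont.continuousOn
    (((isBigO_refl (fun y : ℝ => (y ^ 2)⁻¹) atTop).mul (h.isBigO_one ℝ)).congr' ?_ ?_)
  · filter_upwards [eventually_ne_atTop 0] with z hz
    field_simp
  · exact .of_forall fun z => mul_one _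

end Decay

end ShearProfile

theorem PhiInf_uniform_boundary_limit_general {V g : ℝ → ℝ} {c : ℝ}
    (hV : ContDiff ℝ 3 V) (hV0 : V 0 = 0) (hc : 0 < c)
    (hcV : ∀ z, 0 ≤ z → c ≤ deriv V z) (hV'' : IntegrableOn (deriv (deriv V)) (Ioi 0))
    (hg : ∀ z, 0 ≤ z → g (V z) = deriv (deriv V) z / deriv V z ^ 3) :
    ∃ P : ℝ → ℝ, (∀ a, 0 < a → HasPV g a (P a)) ∧ ∀ ρ R : ℝ, 0 < ρ →
      TendstoUniformlyOn (fun b a : ℝ => PhiInf V (a + b * Complex.I))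
        (fun a : ℝ => ((-1 / deriv V 0 + a * P a : ℝ) : ℂ) - Real.pi * a * g a * Complex.I)
        (𝓝[>] 0) (Icc ρ R) := by
  have hV2 : ContDiff ℝ 2 V := hV.of_le (by norm_num)
  have hgint := integrableOn_of_comp_eq hc hcV hg hV2 hV0 hV''
  have hglip := locallyLipschitzOn_of_comp_eq hc hcV hg hV hV0
  choose! P hP using fun a ha => exists_hasPV (a := a) hgint hglip ha
  refine ⟨P, hP, fun ρ R hρ => ?_⟩
  have hconst : TendstoUniformlyOn (fun _ _ : ℝ => -1 / ((deriv V 0 : ℝ) : ℂ))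
      (fun _ => -1 / ((deriv V 0 : ℝ) : ℂ)) (𝓝[>] 0) (Icc ρ R) :=
    Metric.tendstoUniformlyOn_iff.mpr fun ε hε => .of_forall fun _ _ _ => by simpa using hε
  refine ((hconst.add (tendstoUniformlyOn_mul_cauchyTransform_indicator_Ioi hgint hglip hP hρ
    R)).congr ?_).congr_right fun a _ => ?_
  · filter_upwards [self_mem_nhdsWithin] with b (hb : 0 < b) a _
    refine (PhiInf_eq_add_mul_cauchyTransform hc hcV hg hV2 hV0 hV'' ?_).symm
    rintro ⟨u, -, hu⟩
    exact hb.ne (by simpa using congrArg Complex.im hu)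
  · simp only [Pi.add_apply]
    push_cast
    ring

/-- as `b → 0⁺`, `a ↦ Φ_∞(a+ib)` converges uniformly on `[ρ₀,R]` to
`a ↦ -1/V_s'(0) + a PV∫₀^∞ g(u)/(a-u) du - iπ a g(a)`; in particular the principal
value exists for every `a > 0`. -/
theorem PhiInf_uniform_boundary_limit
    (Vs : ℝ → ℝ) (As : ℝ)
    (hVs_smooth : ContDiff ℝ (⊤ : ℕ∞) Vs)
    (hVs0 : Vs 0 = 0)
    (hVs'pos : ∀ z : ℝ, 0 ≤ z → 0 < deriv Vs z)
    (hdecay : ∀ p : ℕ, Tendsto (fun z : ℝ => z ^ p * (Vs z - z - As)) atTop (nhds 0))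
    (hderiv_decay : ∀ n : ℕ, 1 ≤ n → ∀ p : ℕ,
      Tendsto (fun z : ℝ => z ^ p * iteratedDeriv n (fun w => Vs w - w) z) atTop (nhds 0))
    (g : ℝ → ℝ)
    (hg : ∀ z : ℝ, 0 ≤ z → g (Vs z) = deriv (deriv Vs) z / (deriv Vs z) ^ 3)
    :
    ∃ P : ℝ → ℝ, (∀ a : ℝ, 0 < a → HasPV g a (P a)) ∧
      ∀ ρ₀ R : ℝ, 0 < ρ₀ → ρ₀ < R →
        TendstoUniformlyOn
          (fun (b : ℝ) (a : ℝ) => PhiInf Vs ((a : ℂ) + (b : ℂ) * Complex.I))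
          (fun a : ℝ => ((-1 / deriv Vs 0 + a * P a : ℝ) : ℂ)
            - (Real.pi : ℂ) * (a : ℂ) * (g a : ℂ) * Complex.I)
          (nhdsWithin 0 (Set.Ioi 0)) (Set.Icc ρ₀ R) := by
  have hV3 : ContDiff ℝ 3 Vs := hVs_smooth.of_le (WithTop.coe_le_coe.mpr le_top)
  have hVd : Differentiable ℝ Vs := hV3.differentiable three_ne_zero
  have hlim : Tendsto (deriv Vs) atTop (𝓝 1) :=
    tendsto_deriv_one_of_tendsto_iteratedDeriv hVd (by simpa using hderiv_decay 1 le_rfl 0)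
  obtain ⟨c, hc, hcV⟩ := exists_pos_le_of_tendsto_atTop
    (hV3.continuous_deriv (by norm_num)).continuousOn hVs'pos one_pos hlim
  have hV'' : IntegrableOn (deriv (deriv Vs)) (Ioi 0) :=
    integrableOn_deriv_deriv_of_tendsto_iteratedDeriv (hV3.of_le (by norm_num))
      (hderiv_decay 2 one_le_two 2)
  obtain ⟨P, hP, hunif⟩ := PhiInf_uniform_boundary_limit_general hV3 hVs0 hc hcV hV'' hg
  exact ⟨P, hP, fun ρ₀ R hρ₀ _ => hunif ρ₀ R hρ₀⟩
end
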